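/- arXiv:2412.03444 — 3 statements merged into one kernel-verified Lean document; each statement's English description precedes it below -/
import Mathlib

section
/- Let ρ and σ be positive definite d×d density matrices, and let (α,z) satisfy either α ∈ (0,1)∪(1,∞) with z ∈ (0,1), or 1 < α ≤ 2 with α/2 ≤ z ≤ α, or 2 ≤ α < ∞ with α−1 ≤ z ≤ α. Then the minimum of the sandwiched α-z-Rényi relative entropy S_{α,z}(ρ‖UσU*) over all d×d unitary matrices U equals S_α^C(λ↓(ρ)‖λ↓(σ)). -/
open Matrix
open scoped ComplexOrder

/-- Real power of a (Hermitian) matrix via functional calculus on eigenvalues,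
with `(0:ℝ) ^ t = 0` for `t ≠ 0`. Returns `0` on non-Hermitian input. -/
noncomputable def mpow {d : ℕ} (A : Matrix (Fin d) (Fin d) ℂ) (t : ℝ) :
    Matrix (Fin d) (Fin d) ℂ :=
  if hA : A.IsHermitian then
    (hA.eigenvectorUnitary : Matrix (Fin d) (Fin d) ℂ) *
      Matrix.diagonal (fun i => ((hA.eigenvalues i ^ t : ℝ) : ℂ)) *
      (star (hA.eigenvectorUnitary : Matrix (Fin d) (Fin d) ℂ))
  else 0

/-- The quantum α-z-fidelity
`F_{α,z}(ρ,σ) = (Tr[(σ^{(1-α)/(2z)} ρ^{α/z} σ^{(1-α)/(2z)})^z])^{1/α}`. -/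
noncomputable def Faz {d : ℕ} (ρ σ : Matrix (Fin d) (Fin d) ℂ) (α z : ℝ) : ℝ :=
  ((mpow (mpow σ ((1 - α) / (2 * z)) * mpow ρ (α / z) * mpow σ ((1 - α) / (2 * z))) z).trace.re)
    ^ (1 / α)

/-- The classical α-fidelity `F_α^C(p,q) = (Σ_i p_i^α q_i^{1-α})^{1/α}`. -/
noncomputable def FazC {d : ℕ} (p q : Fin d → ℝ) (α : ℝ) : ℝ :=
  (∑ i, p i ^ α * q i ^ (1 - α)) ^ (1 / α)

/-- The vector `p` rearranged in increasing order. -/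
noncomputable def sortUp {d : ℕ} (p : Fin d → ℝ) : Fin d → ℝ :=
  p ∘ Tuple.sort p

/-- The vector `p` rearranged in decreasing order. -/
noncomputable def sortDown {d : ℕ} (p : Fin d → ℝ) : Fin d → ℝ :=
  fun i => sortUp p i.rev

/-- `λ↑(A)`: the eigenvalues of a Hermitian matrix in increasing order. -/
noncomputable def eigUp {d : ℕ} {A : Matrix (Fin d) (Fin d) ℂ} (hA : A.IsHermitian) :
    Fin d → ℝ := sortUp hA.eigenvalues

/-- `λ↓(A)`: the eigenvalues of a Hermitian matrix in decreasing order. -/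
noncomputable def eigDown {d : ℕ} {A : Matrix (Fin d) (Fin d) ℂ} (hA : A.IsHermitian) :
    Fin d → ℝ := sortDown hA.eigenvalues

/-- The sandwiched α-z-Rényi relative entropy `S_{α,z}(ρ‖σ) = (α/(α−1)) log F_{α,z}(ρ,σ)`. -/
noncomputable def Saz {d : ℕ} (ρ σ : Matrix (Fin d) (Fin d) ℂ) (α z : ℝ) : ℝ :=
  (α / (α - 1)) * Real.log (Faz ρ σ α z)

/-- The classical α-Rényi relative entropy `S_α^C(p‖q) = (α/(α−1)) log F_α^C(p,q)`. -/
noncomputable def SazC {d : ℕ} (p q : Fin d → ℝ) (α : ℝ) : ℝ :=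
  (α / (α - 1)) * Real.log (FazC p q α)

/-!
The trace inside `Faz` is a sum of `z`-th powers of the eigenvalues of `R* N R`, where `N` is a
power of `ρ` and `R` one of `σ`. If `m`, `n` and `p` are the decreasing eigenvalues of `R* R`, `N`
and `R* N R`, then the multiplicative Lidskii inequality bounds a product of `k` of the `pᵢ` by the
product of the `mᵢ` with the same indices times the `k` largest `nᵢ`: raise all eigenvalues of `N`
to at least `τ = nₖ`, note that the resulting matrix dominates both `N` and `τ`, and compare
determinants, using Weyl's monotonicity theorem for `R* N R` and for `τ R* R`.

For the first `k` indices this says that `p` is weakly log-majorized by `m n`. Applied to `R⁻¹`, it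
says that `n` times the *increasing* eigenvalues of `R R*` is weakly log-majorized by `p`. Powers of
`σ` with positive exponent (`α < 1`) keep the ordering of its eigenvalues and those with negative
exponent (`α > 1`) reverse it, so in both cases `FazC` at the decreasing eigenvalues bounds `Faz`
from the side that the sign of `α / (α - 1)` requires. Equality holds once `ρ` and `U σ U*` have a
common eigenbasis with eigenvalues in the same order.
-/

section UnitaryDiagonal

variable {n 𝕜 : Type*} [Fintype n] [DecidableEq n] [RCLike 𝕜]

/-- The ⋆-homomorphism `v ↦ U diag(v) U*`, whose values are the Hermitian matrices having the
columns of `U` as eigenvectors. -/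
noncomputable def unitaryDiagonal (U : unitaryGroup n 𝕜) : (n → ℝ) →⋆ₐ[ℝ] Matrix n n 𝕜 where
  toAlgHom := ((Unitary.conjStarAlgAut 𝕜 (Matrix n n 𝕜) U : Matrix n n 𝕜 →ₐ[𝕜] Matrix n n 𝕜)
    |>.restrictScalars ℝ).comp ((diagonalAlgHom ℝ).comp (RCLike.ofRealAm.compLeft n))
  map_star' v := by
    change Unitary.conjStarAlgAut 𝕜 _ U (diagonal _) =
      star (Unitary.conjStarAlgAut 𝕜 _ U (diagonal _))
    rw [← map_star, star_eq_conjTranspose, diagonal_conjTranspose]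
    congr 2
    ext i
    simp

lemma unitaryDiagonal_apply (U : unitaryGroup n 𝕜) (v : n → ℝ) :
    unitaryDiagonal U v = U * diagonal (fun i ↦ (v i : 𝕜)) * star (U : Matrix n n 𝕜) :=
  rfl

lemma isHermitian_unitaryDiagonal (U : unitaryGroup n 𝕜) (v : n → ℝ) :
    (unitaryDiagonal U v).IsHermitian :=
  (IsSelfAdjoint.all v).map (unitaryDiagonal U)

open scoped MatrixOrder in
lemma unitaryDiagonal_mono (U : unitaryGroup n 𝕜) : Monotone (unitaryDiagonal U) :=
  OrderHomClass.mono _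

lemma conj_unitaryDiagonal (W U : unitaryGroup n 𝕜) (v : n → ℝ) :
    (W : Matrix n n 𝕜) * unitaryDiagonal U v * star (W : Matrix n n 𝕜) =
      unitaryDiagonal (W * U) v := by
  simp only [unitaryDiagonal_apply, UnitaryGroup.mul_val, star_mul, mul_assoc]

lemma posDef_unitaryDiagonal_iff (U : unitaryGroup n 𝕜) (v : n → ℝ) :
    (unitaryDiagonal U v).PosDef ↔ ∀ i, 0 < v i := by
  simp [unitaryDiagonal_apply, Unitary.isUnit_coe.posDef_star_right_conjugate_iff]

lemma trace_unitaryDiagonal (U : unitaryGroup n 𝕜) (v : n → ℝ) :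
    (unitaryDiagonal U v).trace = ((∑ i, v i : ℝ) : 𝕜) := by
  simp [unitaryDiagonal_apply, trace_mul_cycle]

lemma det_unitaryDiagonal (U : unitaryGroup n 𝕜) (v : n → ℝ) :
    (unitaryDiagonal U v).det = ((∏ i, v i : ℝ) : 𝕜) := by
  rw [unitaryDiagonal_apply, det_mul_comm, ← mul_assoc]
  simp

lemma cfc_unitaryDiagonal (U : unitaryGroup n 𝕜) (f : ℝ → ℝ) (v : n → ℝ) :
    cfc f (unitaryDiagonal U v) = unitaryDiagonal U (f ∘ v) := by
  obtain ⟨q, hq⟩ : ∃ q : Polynomial ℝ, ∀ i, q.eval (v i) = f (v i) :=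
    ⟨Lagrange.interpolate (Finset.univ.image v) id f, fun i ↦
      Lagrange.eval_interpolate_at_node f (Set.injOn_id _) (by simp)⟩
  have spectrum_subset : spectrum ℝ (unitaryDiagonal U v) ⊆ Set.range v := fun x hx ↦ by
    simpa [Pi.spectrum_eq, spectrum.mem_iff, sub_eq_zero, eq_comm] using
      AlgHom.spectrum_apply_subset (unitaryDiagonal U) v hx
  calc cfc f (unitaryDiagonal U v) = cfc q.eval (unitaryDiagonal U v) :=
        cfc_congr fun x hx ↦ by obtain ⟨i, rfl⟩ := spectrum_subset hx; exact (hq i).symm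
    _ = Polynomial.aeval (unitaryDiagonal U v) q :=
        cfc_polynomial q _ (isHermitian_unitaryDiagonal U v)
    _ = unitaryDiagonal U (f ∘ v) := by
        rw [Polynomial.aeval_algHom_apply]
        congr 1
        ext i
        simp [hq]

lemma re_dotProduct_unitaryDiagonal_mulVec (U : unitaryGroup n 𝕜) (v : n → ℝ) (x : n → 𝕜) :
    RCLike.re (star x ⬝ᵥ unitaryDiagonal U v *ᵥ x) =
      ∑ i, v i * ‖(star (U : Matrix n n 𝕜) *ᵥ x) i‖ ^ 2 := by
  have star_vecMul : star x ᵥ* (U : Matrix n n 𝕜) = star (star (U : Matrix n n 𝕜) *ᵥ x) := by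
    rw [star_mulVec, star_eq_conjTranspose, conjTranspose_conjTranspose]
  rw [unitaryDiagonal_apply, ← mulVec_mulVec, ← mulVec_mulVec, dotProduct_mulVec, star_vecMul,
    dotProduct, map_sum]
  refine Finset.sum_congr rfl fun i _ ↦ ?_
  rw [mulVec_diagonal, Pi.star_apply, mul_left_comm, RCLike.star_def, RCLike.conj_mul]
  norm_cast

lemma re_dotProduct_unitaryDiagonal_mulVec_le (U : unitaryGroup n 𝕜) {v : n → ℝ} {x : n → 𝕜}
    {c : ℝ} (h : ∀ i, (star (U : Matrix n n 𝕜) *ᵥ x) i ≠ 0 → v i ≤ c) :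
    RCLike.re (star x ⬝ᵥ unitaryDiagonal U v *ᵥ x) ≤ c * RCLike.re (star x ⬝ᵥ x) := by
  have parseval := re_dotProduct_unitaryDiagonal_mulVec U 1 x
  rw [map_one, one_mulVec] at parseval
  rw [re_dotProduct_unitaryDiagonal_mulVec, parseval, Finset.mul_sum]
  refine Finset.sum_le_sum fun i _ ↦ ?_
  by_cases hi : (star (U : Matrix n n 𝕜) *ᵥ x) i = 0
  · simp [hi]
  · simpa using mul_le_mul_of_nonneg_right (h i hi) (sq_nonneg _)

lemma le_re_dotProduct_unitaryDiagonal_mulVec (U : unitaryGroup n 𝕜) {v : n → ℝ} {x : n → 𝕜}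
    {c : ℝ} (h : ∀ i, (star (U : Matrix n n 𝕜) *ᵥ x) i ≠ 0 → c ≤ v i) :
    c * RCLike.re (star x ⬝ᵥ x) ≤ RCLike.re (star x ⬝ᵥ unitaryDiagonal U v *ᵥ x) := by
  have := re_dotProduct_unitaryDiagonal_mulVec_le U (v := -v) (c := -c) fun i hi ↦
    neg_le_neg (h i hi)
  simpa [neg_mulVec] using this

end UnitaryDiagonal

section HasEigenvalues

variable {n 𝕜 : Type*} [Fintype n] [DecidableEq n] [RCLike 𝕜]
  {A : Matrix n n 𝕜} {v : n → ℝ}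

/-- `A` is Hermitian with eigenvalues `v`, listed with multiplicity and in any order. -/
def HasEigenvalues (A : Matrix n n 𝕜) (v : n → ℝ) : Prop :=
  ∃ U : unitaryGroup n 𝕜, unitaryDiagonal U v = A

lemma hasEigenvalues_eigenvalues (hA : A.IsHermitian) : HasEigenvalues A hA.eigenvalues :=
  ⟨hA.eigenvectorUnitary, hA.spectral_theorem.symm⟩

namespace HasEigenvalues

lemma isHermitian (hA : HasEigenvalues A v) : A.IsHermitian := by
  obtain ⟨U, rfl⟩ := hA
  exact isHermitian_unitaryDiagonal U v

lemma posDef_iff (hA : HasEigenvalues A v) : A.PosDef ↔ ∀ i, 0 < v i := by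
  obtain ⟨U, rfl⟩ := hA
  exact posDef_unitaryDiagonal_iff U v

lemma isUnit (hA : HasEigenvalues A v) (hv : ∀ i, 0 < v i) : IsUnit A :=
  (hA.posDef_iff.2 hv).isUnit

lemma det_eq (hA : HasEigenvalues A v) : A.det = ((∏ i, v i : ℝ) : 𝕜) := by
  obtain ⟨U, rfl⟩ := hA
  exact det_unitaryDiagonal U v

lemma smul (hA : HasEigenvalues A v) (c : ℝ) : HasEigenvalues (c • A) (c • v) := by
  obtain ⟨U, rfl⟩ := hA
  exact ⟨U, map_smul _ _ _⟩

lemma inv (hA : HasEigenvalues A v) (hv : ∀ i, v i ≠ 0) : HasEigenvalues A⁻¹ v⁻¹ := by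
  obtain ⟨U, rfl⟩ := hA
  refine ⟨U, (inv_eq_right_inv ?_).symm⟩
  rw [← map_mul, ← map_one (unitaryDiagonal U)]
  congr 1
  ext i
  exact mul_inv_cancel₀ (hv i)

lemma conj (hA : HasEigenvalues A v) (W : unitaryGroup n 𝕜) :
    HasEigenvalues ((W : Matrix n n 𝕜) * A * star (W : Matrix n n 𝕜)) v := by
  obtain ⟨U, rfl⟩ := hA
  exact ⟨W * U, (conj_unitaryDiagonal W U v).symm⟩

lemma comp_perm (hA : HasEigenvalues A v) (π : Equiv.Perm n) : HasEigenvalues A (v ∘ π) := by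
  obtain ⟨U, rfl⟩ := hA
  have star_submatrix : star ((U : Matrix n n 𝕜).submatrix id π) =
      (star (U : Matrix n n 𝕜)).submatrix π id := rfl
  have diagonal_comp : diagonal (fun i ↦ ((v ∘ π) i : 𝕜)) =
      (diagonal fun i ↦ (v i : 𝕜)).submatrix π π :=
    (submatrix_diagonal (fun i ↦ (v i : 𝕜)) π π.injective).symm
  have mem_unitaryGroup : (U : Matrix n n 𝕜).submatrix id π ∈ unitaryGroup n 𝕜 := by
    rw [mem_unitaryGroup_iff, star_submatrix, submatrix_mul_equiv, mem_unitaryGroup_iff.1 U.2,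
      submatrix_id_id]
  refine ⟨⟨_, mem_unitaryGroup⟩, ?_⟩
  change (U : Matrix n n 𝕜).submatrix id π * diagonal (fun i ↦ ((v ∘ π) i : 𝕜)) *
    star ((U : Matrix n n 𝕜).submatrix id π) = _
  rw [diagonal_comp, star_submatrix, submatrix_mul_equiv, submatrix_mul_equiv, submatrix_id_id,
    unitaryDiagonal_apply]

end HasEigenvalues

end HasEigenvalues

section Weyl

open scoped MatrixOrder

variable {n 𝕜 : Type*} [Fintype n] [LinearOrder n] [RCLike 𝕜]

-- Combine the rows of `M` before `i` and those of `N` after `i` into a matrix with a zero row.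
lemma exists_ne_zero_mulVec_eq_zero (M N : Matrix n n 𝕜) (i : n) :
    ∃ x ≠ 0, (∀ j < i, (M *ᵥ x) j = 0) ∧ ∀ j > i, (N *ᵥ x) j = 0 := by
  let K : Matrix n n 𝕜 := fun j ↦ if j < i then M j else if j = i then 0 else N j
  have hK : K.det = 0 := det_eq_zero_of_row_eq_zero i fun j ↦ by simp [K]
  obtain ⟨x, hx0, hx⟩ := exists_mulVec_eq_zero_iff.2 hK
  refine ⟨x, hx0, fun j hj ↦ ?_, fun j hj ↦ ?_⟩
  · simpa [K, hj, mulVec] using congrFun hx j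
  · simpa [K, hj.ne', hj.not_gt, mulVec] using congrFun hx j

/-- **Weyl's monotonicity theorem**. -/
theorem HasEigenvalues.le_of_le {A B : Matrix n n 𝕜} {a b : n → ℝ} (hA : HasEigenvalues A a)
    (hB : HasEigenvalues B b) (ha : Antitone a) (hb : Antitone b) (hAB : A ≤ B) : a ≤ b := by
  obtain ⟨U, rfl⟩ := hA
  obtain ⟨V, rfl⟩ := hB
  intro i
  obtain ⟨x, hx0, hV, hU⟩ := exists_ne_zero_mulVec_eq_zero
    (star (V : Matrix n n 𝕜)) (star (U : Matrix n n 𝕜)) i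
  have x_pos : 0 < RCLike.re (star x ⬝ᵥ x) :=
    (RCLike.pos_iff.1 (dotProduct_star_self_pos_iff.2 hx0)).1
  refine le_of_mul_le_mul_right ?_ x_pos
  calc a i * RCLike.re (star x ⬝ᵥ x)
      ≤ RCLike.re (star x ⬝ᵥ unitaryDiagonal U a *ᵥ x) :=
        le_re_dotProduct_unitaryDiagonal_mulVec U fun j hj ↦
          ha (not_lt.1 fun hij ↦ hj (hU j hij))
    _ ≤ RCLike.re (star x ⬝ᵥ unitaryDiagonal V b *ᵥ x) := by
        have := (le_iff.1 hAB).re_dotProduct_nonneg x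
        rwa [sub_mulVec, dotProduct_sub, map_sub, sub_nonneg] at this
    _ ≤ b i * RCLike.re (star x ⬝ᵥ x) :=
        re_dotProduct_unitaryDiagonal_mulVec_le V fun j hj ↦
          hb (not_lt.1 fun hji ↦ hj (hV j hji))

end Weyl

section Sorting

variable {d : ℕ}

lemma exists_sortDown_eq_comp (p : Fin d → ℝ) : ∃ π : Equiv.Perm (Fin d), sortDown p = p ∘ π :=
  ⟨Fin.revPerm.trans (Tuple.sort p), rfl⟩

lemma antitone_sortDown (p : Fin d → ℝ) : Antitone (sortDown p) := fun _ _ hij ↦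
  Tuple.monotone_sort p (Fin.rev_le_rev.2 hij)

variable {𝕜 : Type*} [RCLike 𝕜] {A : Matrix (Fin d) (Fin d) 𝕜}

protected lemma HasEigenvalues.sortDown {v : Fin d → ℝ} (hA : HasEigenvalues A v) :
    HasEigenvalues A (sortDown v) := by
  obtain ⟨π, hπ⟩ := exists_sortDown_eq_comp v
  exact hπ ▸ hA.comp_perm π

lemma exists_antitone_hasEigenvalues (hA : A.IsHermitian) :
    ∃ v, Antitone v ∧ HasEigenvalues A v :=
  ⟨_, antitone_sortDown _, (hasEigenvalues_eigenvalues hA).sortDown⟩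

end Sorting

section Lidskii

lemma prod_max_of_antitone {ι M : Type*} [Fintype ι] [LinearOrder ι] [LocallyFiniteOrderBot ι]
    [CommMonoid M] [LinearOrder M] {n : ι → M} (hn : Antitone n) (k : ι) :
    ∏ i, max (n i) (n k) = (∏ i ∈ Finset.Iic k, n i) * n k ^ (Finset.Iic k)ᶜ.card := by
  rw [← Finset.prod_mul_prod_compl (Finset.Iic k), ← Finset.prod_const]
  congr 1
  · exact Finset.prod_congr rfl fun i hi ↦ max_eq_left (hn (Finset.mem_Iic.1 hi))
  · refine Finset.prod_congr rfl fun i hi ↦ max_eq_right (hn ?_)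
    exact (not_le.1 (Finset.mem_compl.1 hi ∘ Finset.mem_Iic.2)).le

open scoped MatrixOrder

variable {d : ℕ} {𝕜 : Type*} [RCLike 𝕜] {R N : Matrix (Fin d) (Fin d) 𝕜} {p m n : Fin d → ℝ}

lemma HasEigenvalues.pos_of_conj (hP : HasEigenvalues (star R * N * R) p)
    (hN : HasEigenvalues N n) (hR : IsUnit R) (hn : ∀ i, 0 < n i) : ∀ i, 0 < p i :=
  hP.posDef_iff.1 (hR.posDef_star_left_conjugate_iff.2 (hN.posDef_iff.2 hn))

-- Raising the eigenvalues of `N` to at least `τ` gives a matrix above both `N` and `τ • 1`.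
lemma HasEigenvalues.exists_truncation (hP : HasEigenvalues (star R * N * R) p)
    (hM : HasEigenvalues (star R * R) m) (hN : HasEigenvalues N n) (hp : Antitone p)
    (hm : Antitone m) {τ : ℝ} (hτ : 0 ≤ τ) :
    ∃ q : Fin d → ℝ, p ≤ q ∧ τ • m ≤ q ∧ ∏ i, q i = (∏ i, m i) * ∏ i, max (n i) τ := by
  obtain ⟨V, rfl⟩ := hN
  obtain ⟨q, hq, hQ⟩ := exists_antitone_hasEigenvalues <|
    (isHermitian_unitaryDiagonal V (n ⊔ algebraMap ℝ _ τ)).isSelfAdjoint.conjugate' R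
  have hτm : Antitone (τ • m) := fun _ _ hij ↦ mul_le_mul_of_nonneg_left (hm hij) hτ
  refine ⟨q, hP.le_of_le hQ hp hq ?_, (hM.smul τ).le_of_le hQ hτm hq ?_, ?_⟩
  · exact star_left_conjugate_le_conjugate (unitaryDiagonal_mono V le_sup_left) R
  · calc τ • (star R * R) = star R * unitaryDiagonal V (algebraMap ℝ _ τ) * R := by
          simp [Algebra.algebraMap_eq_smul_one]
      _ ≤ star R * unitaryDiagonal V (n ⊔ algebraMap ℝ _ τ) * R :=
          star_left_conjugate_le_conjugate (unitaryDiagonal_mono V le_sup_right) R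
  · have det_truncation := det_unitaryDiagonal V (n ⊔ algebraMap ℝ _ τ)
    have det_mul_det := hM.det_eq
    have det_conj := hQ.det_eq
    rw [det_mul] at det_mul_det
    rw [det_mul_right_comm, det_mul, det_mul, det_mul_det, det_truncation] at det_conj
    exact_mod_cast det_conj.symm

/-- The **multiplicative Lidskii inequality**, by the truncation argument of Li and Mathias. -/
theorem HasEigenvalues.prod_conj_le (hP : HasEigenvalues (star R * N * R) p)
    (hM : HasEigenvalues (star R * R) m) (hN : HasEigenvalues N n) (hp : Antitone p)
    (hm : Antitone m) (hn : Antitone n) (hm0 : ∀ i, 0 < m i) (hn0 : ∀ i, 0 < n i)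
    {I : Finset (Fin d)} {k : Fin d} (hI : I.card = (Finset.Iic k).card) :
    ∏ i ∈ I, p i ≤ (∏ i ∈ I, m i) * ∏ i ∈ Finset.Iic k, n i := by
  obtain ⟨q, hpq, hmq, prod_q⟩ := hP.exists_truncation hM hN hp hm (hn0 k).le
  have hp0 := hP.pos_of_conj hN (isUnit_of_mul_isUnit_right (hM.isUnit hm0)) hn0
  have compl_pos : 0 < ∏ i ∈ Iᶜ, n k * m i := Finset.prod_pos fun i _ ↦ mul_pos (hn0 k) (hm0 i)
  refine le_of_mul_le_mul_right ?_ compl_pos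
  calc (∏ i ∈ I, p i) * ∏ i ∈ Iᶜ, n k * m i
      ≤ (∏ i ∈ I, q i) * ∏ i ∈ Iᶜ, q i := by
        refine mul_le_mul (Finset.prod_le_prod (fun i _ ↦ (hp0 i).le) fun i _ ↦ hpq i)
          (Finset.prod_le_prod (fun i _ ↦ (mul_pos (hn0 k) (hm0 i)).le) fun i _ ↦ hmq i)
          compl_pos.le (Finset.prod_nonneg fun i _ ↦ ((hp0 i).trans_le (hpq i)).le)
    _ = ((∏ i ∈ I, m i) * ∏ i ∈ Iᶜ, m i) *
          ((∏ i ∈ Finset.Iic k, n i) * n k ^ (Finset.Iic k)ᶜ.card) := by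
        rw [Finset.prod_mul_prod_compl, Finset.prod_mul_prod_compl, prod_q, prod_max_of_antitone hn]
    _ = ((∏ i ∈ I, m i) * ∏ i ∈ Finset.Iic k, n i) * ∏ i ∈ Iᶜ, n k * m i := by
        rw [Finset.prod_mul_distrib, Finset.prod_const, Finset.card_compl, Finset.card_compl, hI]
        ring

end Lidskii

section LogMajorization

variable {d : ℕ}

-- Abel summation: split `w` into the constant `w (last d)` and a weight vanishing at `last d`.
lemma sum_mul_nonneg_of_antitone {S : Type*} [Ring S] [PartialOrder S] [IsOrderedRing S]
    {w u : Fin d → S} (hw : Antitone w) (hw0 : ∀ i, 0 ≤ w i)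
    (hu : ∀ k, 0 ≤ ∑ i ∈ Finset.Iic k, u i) : 0 ≤ ∑ i, w i * u i := by
  induction d with
  | zero => simp
  | succ d ih =>
    have ih_nonneg : 0 ≤ ∑ i : Fin d, (w i.castSucc - w (Fin.last d)) * u i.castSucc := by
      refine ih (fun i j hij ↦ sub_le_sub_right (hw (Fin.castSucc_le_castSucc_iff.2 hij)) _)
        (fun i ↦ sub_nonneg.2 (hw (Fin.le_last _))) fun k ↦ ?_
      simpa [← Fin.map_castSuccEmb_Iic] using hu k.castSucc
    have total_nonneg : 0 ≤ ∑ i, u i := by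
      simpa [← Fin.top_eq_last] using hu (Fin.last d)
    calc 0 ≤ ∑ i : Fin d, (w i.castSucc - w (Fin.last d)) * u i.castSucc +
          w (Fin.last d) * ∑ i, u i := add_nonneg ih_nonneg (mul_nonneg (hw0 _) total_nonneg)
      _ = ∑ i, w i * u i := by
        simp only [Fin.sum_univ_castSucc, sub_mul, Finset.sum_sub_distrib, Finset.mul_sum, mul_add]
        abel

lemma rpow_mul_log_sub_log_le {x y : ℝ} (hx : 0 < x) (hy : 0 < y) (z : ℝ) :
    x ^ z * (z * (Real.log y - Real.log x)) ≤ y ^ z - x ^ z := by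
  have y_rpow : y ^ z = x ^ z * Real.exp (z * (Real.log y - Real.log x)) := by
    rw [Real.rpow_def_of_pos hy, Real.rpow_def_of_pos hx, ← Real.exp_add]
    ring_nf
  have := mul_le_mul_of_nonneg_left (Real.add_one_le_exp (z * (Real.log y - Real.log x)))
    (Real.rpow_pos_of_pos hx z).le
  linarith

variable {x y : Fin d → ℝ} {z : ℝ}

lemma sum_rpow_le_of_prod_Iic_le (hx : Antitone x) (hx0 : ∀ i, 0 < x i) (hy0 : ∀ i, 0 < y i)
    (h : ∀ k, ∏ i ∈ Finset.Iic k, x i ≤ ∏ i ∈ Finset.Iic k, y i) (hz : 0 ≤ z) :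
    ∑ i, x i ^ z ≤ ∑ i, y i ^ z := by
  rw [← sub_nonneg, ← Finset.sum_sub_distrib]
  calc 0 ≤ ∑ i, x i ^ z * (z * (Real.log (y i) - Real.log (x i))) := by
        refine sum_mul_nonneg_of_antitone
          (fun i j hij ↦ Real.rpow_le_rpow (hx0 j).le (hx hij) hz)
          (fun i ↦ (Real.rpow_pos_of_pos (hx0 i) z).le) fun k ↦ ?_
        rw [← Finset.mul_sum, Finset.sum_sub_distrib, ← Real.log_prod fun i _ ↦ (hy0 i).ne',
          ← Real.log_prod fun i _ ↦ (hx0 i).ne']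
        exact mul_nonneg hz (sub_nonneg.2
          (Real.log_le_log (Finset.prod_pos fun i _ ↦ hx0 i) (h k)))
    _ ≤ ∑ i, (y i ^ z - x i ^ z) :=
        Finset.sum_le_sum fun i _ ↦ rpow_mul_log_sub_log_le (hx0 i) (hy0 i) z

lemma sum_rpow_le_of_prod_le (hx0 : ∀ i, 0 < x i) (hy0 : ∀ i, 0 < y i)
    (h : ∀ (I : Finset (Fin d)) (k : Fin d), I.card = (Finset.Iic k).card →
      ∏ i ∈ I, x i ≤ ∏ i ∈ Finset.Iic k, y i) (hz : 0 ≤ z) :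
    ∑ i, x i ^ z ≤ ∑ i, y i ^ z := by
  obtain ⟨π, hπ⟩ := exists_sortDown_eq_comp x
  have antitone_comp : Antitone (x ∘ π) := hπ ▸ antitone_sortDown x
  rw [← Equiv.sum_comp π fun i ↦ x i ^ z]
  refine sum_rpow_le_of_prod_Iic_le antitone_comp (fun i ↦ hx0 (π i)) hy0 (fun k ↦ ?_) hz
  simpa using h ((Finset.Iic k).map π.toEmbedding) k (Finset.card_map _)

end LogMajorization

section TraceInequalities

variable {d : ℕ} {𝕜 : Type*} [RCLike 𝕜] {R N : Matrix (Fin d) (Fin d) 𝕜} {p m n : Fin d → ℝ}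
  {z : ℝ}

theorem HasEigenvalues.sum_rpow_conj_le_sum_mul_rpow (hP : HasEigenvalues (star R * N * R) p)
    (hM : HasEigenvalues (star R * R) m) (hN : HasEigenvalues N n) (hp : Antitone p)
    (hm : Antitone m) (hn : Antitone n) (hm0 : ∀ i, 0 < m i) (hn0 : ∀ i, 0 < n i) (hz : 0 ≤ z) :
    ∑ i, p i ^ z ≤ ∑ i, (m i * n i) ^ z := by
  refine sum_rpow_le_of_prod_Iic_le hp
    (hP.pos_of_conj hN (isUnit_of_mul_isUnit_right (hM.isUnit hm0)) hn0)
    (fun i ↦ mul_pos (hm0 i) (hn0 i)) (fun k ↦ ?_) hz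
  rw [Finset.prod_mul_distrib]
  exact hP.prod_conj_le hM hN hp hm hn hm0 hn0 rfl

-- The multiplicative Lidskii inequality for `R⁻¹`, which conjugates `R* N R` back to `N`.
theorem HasEigenvalues.sum_mul_rpow_le_sum_rpow_conj (hP : HasEigenvalues (star R * N * R) p)
    (hM : HasEigenvalues (R * star R) m) (hN : HasEigenvalues N n) (hp : Antitone p)
    (hm : Monotone m) (hn : Antitone n) (hm0 : ∀ i, 0 < m i) (hn0 : ∀ i, 0 < n i)
    (hz : 0 ≤ z) : ∑ i, (m i * n i) ^ z ≤ ∑ i, p i ^ z := by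
  have isUnit_R : IsUnit R := isUnit_of_mul_isUnit_left (hM.isUnit hm0)
  have hp0 := hP.pos_of_conj hN isUnit_R hn0
  have mul_inv : R * R⁻¹ = 1 := mul_nonsing_inv R ((isUnit_iff_isUnit_det R).1 isUnit_R)
  have star_inv_mul_star : star R⁻¹ * star R = 1 := by rw [← star_mul, mul_inv, star_one]
  have hN' : HasEigenvalues (star R⁻¹ * (star R * N * R) * R⁻¹) n := by
    have : star R⁻¹ * (star R * N * R) * R⁻¹ = (star R⁻¹ * star R) * N * (R * R⁻¹) := by
      simp only [mul_assoc]
    rwa [this, star_inv_mul_star, mul_inv, one_mul, mul_one]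
  have hM' : HasEigenvalues (star R⁻¹ * R⁻¹) m⁻¹ := by
    have : star R⁻¹ * R⁻¹ = (R * star R)⁻¹ := by
      rw [Matrix.mul_inv_rev, inv_eq_left_inv star_inv_mul_star]
    rw [this]
    exact hM.inv fun i ↦ (hm0 i).ne'
  refine sum_rpow_le_of_prod_le (fun i ↦ mul_pos (hm0 i) (hn0 i)) hp0 (fun I k hI ↦ ?_) hz
  have lidskii := hN'.prod_conj_le hM' hP hn (fun i j hij ↦ inv_anti₀ (hm0 i) (hm hij)) hp
    (fun i ↦ inv_pos.2 (hm0 i)) hp0 hI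
  rwa [Finset.prod_congr rfl fun i _ ↦ Pi.inv_apply m i, Finset.prod_inv_distrib,
    ← div_eq_inv_mul, le_div_iff₀' (Finset.prod_pos fun i _ ↦ hm0 i),
    ← Finset.prod_mul_distrib] at lidskii

end TraceInequalities

section MatrixPower

variable {d : ℕ} {A : Matrix (Fin d) (Fin d) ℂ} {v : Fin d → ℝ}

lemma mpow_unitaryDiagonal (U : unitaryGroup (Fin d) ℂ) (v : Fin d → ℝ) (t : ℝ) :
    mpow (unitaryDiagonal U v) t = unitaryDiagonal U fun i ↦ v i ^ t := by
  have hA := isHermitian_unitaryDiagonal U v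
  calc mpow (unitaryDiagonal U v) t = hA.cfc (· ^ t) := dif_pos hA
    _ = cfc (· ^ t) (unitaryDiagonal U v) := (hA.cfc_eq _).symm
    _ = unitaryDiagonal U fun i ↦ v i ^ t := cfc_unitaryDiagonal U _ v

protected lemma HasEigenvalues.mpow (hA : HasEigenvalues A v) (t : ℝ) :
    HasEigenvalues (mpow A t) fun i ↦ v i ^ t := by
  obtain ⟨U, rfl⟩ := hA
  exact ⟨U, (mpow_unitaryDiagonal U v t).symm⟩

lemma HasEigenvalues.mpow_mul_mpow (hA : HasEigenvalues A v) (hv : ∀ i, 0 < v i) (s t : ℝ) :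
    HasEigenvalues (mpow A s * mpow A t) fun i ↦ v i ^ (s + t) := by
  obtain ⟨U, rfl⟩ := hA
  refine ⟨U, ?_⟩
  rw [mpow_unitaryDiagonal, mpow_unitaryDiagonal, ← map_mul]
  congr 1
  ext i
  exact Real.rpow_add (hv i) s t

lemma HasEigenvalues.star_mpow (hA : HasEigenvalues A v) (t : ℝ) : star (mpow A t) = mpow A t :=
  (hA.mpow t).isHermitian

end MatrixPower

section Fidelity

variable {d : ℕ} {ρ σ : Matrix (Fin d) (Fin d) ℂ} {a s : Fin d → ℝ} {α z : ℝ}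

lemma rpow_div_mul_rpow_div_rpow {x y : ℝ} (hx : 0 ≤ x) (hy : 0 ≤ y) (hz : z ≠ 0) (β γ : ℝ) :
    (x ^ (β / z) * y ^ (γ / z)) ^ z = x ^ β * y ^ γ := by
  rw [Real.mul_rpow (Real.rpow_nonneg hx _) (Real.rpow_nonneg hy _), ← Real.rpow_mul hx,
    ← Real.rpow_mul hy, div_mul_cancel₀ _ hz, div_mul_cancel₀ _ hz]

lemma FazC_eq_sum_rpow (ha : ∀ i, 0 ≤ a i) (hs : ∀ i, 0 ≤ s i) (hz : z ≠ 0) :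
    FazC a s α = (∑ i, (s i ^ ((1 - α) / z) * a i ^ (α / z)) ^ z) ^ (1 / α) := by
  simp only [FazC, rpow_div_mul_rpow_div_rpow (hs _) (ha _) hz, mul_comm (_ ^ α)]

lemma Faz_eq_of_hasEigenvalues {c : Fin d → ℝ} (h : HasEigenvalues (mpow σ ((1 - α) / (2 * z)) *
    mpow ρ (α / z) * mpow σ ((1 - α) / (2 * z))) c) :
    Faz ρ σ α z = (∑ i, c i ^ z) ^ (1 / α) := by
  obtain ⟨U, hU⟩ := h
  rw [Faz, ← hU, mpow_unitaryDiagonal, trace_unitaryDiagonal, RCLike.ofReal_eq_complex_ofReal,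
    Complex.ofReal_re]

lemma div_two_mul_add_self {K : Type*} [Field K] [NeZero (2 : K)] (x z : K) :
    x / (2 * z) + x / (2 * z) = x / z := by
  rw [← add_div, ← two_mul, mul_div_mul_left _ _ two_ne_zero]

lemma Faz_unitaryDiagonal (U : unitaryGroup (Fin d) ℂ) (ha : ∀ i, 0 ≤ a i) (hs : ∀ i, 0 < s i)
    (hz : z ≠ 0) : Faz (unitaryDiagonal U a) (unitaryDiagonal U s) α z = FazC a s α := by
  have sandwich : HasEigenvalues (mpow (unitaryDiagonal U s) ((1 - α) / (2 * z)) *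
      mpow (unitaryDiagonal U a) (α / z) * mpow (unitaryDiagonal U s) ((1 - α) / (2 * z)))
      fun i ↦ s i ^ ((1 - α) / z) * a i ^ (α / z) := by
    refine ⟨U, ?_⟩
    simp only [mpow_unitaryDiagonal, ← map_mul]
    congr 1
    ext i
    rw [← div_two_mul_add_self, Real.rpow_add (hs i)]
    exact mul_right_comm _ _ _
  rw [Faz_eq_of_hasEigenvalues sandwich, FazC_eq_sum_rpow ha (fun i ↦ (hs i).le) hz]

namespace HasEigenvalues

lemma exists_hasEigenvalues_sandwich (hρ : HasEigenvalues ρ a) (hσ : HasEigenvalues σ s)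
    (ha0 : ∀ i, 0 < a i) (hs0 : ∀ i, 0 < s i) (r t : ℝ) :
    ∃ c : Fin d → ℝ, Antitone c ∧ (∀ i, 0 < c i) ∧
      HasEigenvalues (mpow σ r * mpow ρ t * mpow σ r) c := by
  obtain ⟨c, hc, sandwich⟩ := exists_antitone_hasEigenvalues <|
    (hρ.mpow t).isHermitian.isSelfAdjoint.conjugate' (mpow σ r)
  have isUnit_mpow := (hσ.mpow r).isUnit fun i ↦ Real.rpow_pos_of_pos (hs0 i) r
  have c_pos := sandwich.pos_of_conj (hρ.mpow t) isUnit_mpow fun i ↦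
    Real.rpow_pos_of_pos (ha0 i) t
  rw [hσ.star_mpow] at sandwich
  exact ⟨c, hc, c_pos, sandwich⟩

lemma Faz_pos [NeZero d] (hρ : HasEigenvalues ρ a) (hσ : HasEigenvalues σ s)
    (ha0 : ∀ i, 0 < a i) (hs0 : ∀ i, 0 < s i) (α z : ℝ) : 0 < Faz ρ σ α z := by
  obtain ⟨c, -, hc0, sandwich⟩ :=
    hρ.exists_hasEigenvalues_sandwich hσ ha0 hs0 ((1 - α) / (2 * z)) (α / z)
  rw [Faz_eq_of_hasEigenvalues sandwich]
  exact Real.rpow_pos_of_pos (Finset.sum_pos (fun i _ ↦ Real.rpow_pos_of_pos (hc0 i) z)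
    Finset.univ_nonempty) _

theorem Faz_le_FazC (hρ : HasEigenvalues ρ a) (hσ : HasEigenvalues σ s) (ha : Antitone a)
    (hs : Antitone s) (ha0 : ∀ i, 0 < a i) (hs0 : ∀ i, 0 < s i) (hα0 : 0 < α) (hα1 : α ≤ 1)
    (hz : 0 < z) : Faz ρ σ α z ≤ FazC a s α := by
  obtain ⟨c, hc, hc0, sandwich⟩ :=
    hρ.exists_hasEigenvalues_sandwich hσ ha0 hs0 ((1 - α) / (2 * z)) (α / z)
  have gram := hσ.mpow_mul_mpow hs0 ((1 - α) / (2 * z)) ((1 - α) / (2 * z))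
  rw [Faz_eq_of_hasEigenvalues sandwich,
    FazC_eq_sum_rpow (fun i ↦ (ha0 i).le) (fun i ↦ (hs0 i).le) hz.ne']
  refine Real.rpow_le_rpow (Finset.sum_nonneg fun i _ ↦ Real.rpow_nonneg (hc0 i).le z) ?_
    (by positivity)
  nth_rw 1 [← hσ.star_mpow] at sandwich gram
  rw [div_two_mul_add_self] at gram
  exact sandwich.sum_rpow_conj_le_sum_mul_rpow gram (hρ.mpow _) hc
    (fun i j hij ↦ Real.rpow_le_rpow (hs0 j).le (hs hij) (div_nonneg (by linarith) hz.le))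
    (fun i j hij ↦ Real.rpow_le_rpow (ha0 j).le (ha hij) (by positivity))
    (fun i ↦ Real.rpow_pos_of_pos (hs0 i) _) (fun i ↦ Real.rpow_pos_of_pos (ha0 i) _) hz.le

theorem FazC_le_Faz (hρ : HasEigenvalues ρ a) (hσ : HasEigenvalues σ s) (ha : Antitone a)
    (hs : Antitone s) (ha0 : ∀ i, 0 < a i) (hs0 : ∀ i, 0 < s i) (hα : 1 ≤ α) (hz : 0 < z) :
    FazC a s α ≤ Faz ρ σ α z := by
  obtain ⟨c, hc, -, sandwich⟩ :=
    hρ.exists_hasEigenvalues_sandwich hσ ha0 hs0 ((1 - α) / (2 * z)) (α / z)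
  have gram := hσ.mpow_mul_mpow hs0 ((1 - α) / (2 * z)) ((1 - α) / (2 * z))
  have a_pos (i) : 0 < a i ^ (α / z) := Real.rpow_pos_of_pos (ha0 i) _
  have s_pos (i) : 0 < s i ^ ((1 - α) / z) := Real.rpow_pos_of_pos (hs0 i) _
  rw [Faz_eq_of_hasEigenvalues sandwich,
    FazC_eq_sum_rpow (fun i ↦ (ha0 i).le) (fun i ↦ (hs0 i).le) hz.ne']
  refine Real.rpow_le_rpow
    (Finset.sum_nonneg fun i _ ↦ Real.rpow_nonneg (mul_pos (s_pos i) (a_pos i)).le z) ?_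
    (by positivity)
  nth_rw 1 [← hσ.star_mpow] at sandwich
  nth_rw 2 [← hσ.star_mpow] at gram
  rw [div_two_mul_add_self] at gram
  exact sandwich.sum_mul_rpow_le_sum_rpow_conj gram (hρ.mpow _) hc
    (fun i j hij ↦ Real.rpow_le_rpow_of_nonpos (hs0 j) (hs hij)
      (div_nonpos_of_nonpos_of_nonneg (by linarith) hz.le))
    (fun i j hij ↦ Real.rpow_le_rpow (ha0 j).le (ha hij) (by positivity)) s_pos a_pos hz.le

theorem SazC_le_Saz [NeZero d] (hρ : HasEigenvalues ρ a) (hσ : HasEigenvalues σ s)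
    (ha : Antitone a) (hs : Antitone s) (ha0 : ∀ i, 0 < a i) (hs0 : ∀ i, 0 < s i)
    (hα : α ∈ Set.Ioo 0 1 ∨ 1 < α) (hz : 0 < z) : SazC a s α ≤ Saz ρ σ α z := by
  have FazC_pos : 0 < FazC a s α := Real.rpow_pos_of_pos (Finset.sum_pos (fun i _ ↦
    mul_pos (Real.rpow_pos_of_pos (ha0 i) _) (Real.rpow_pos_of_pos (hs0 i) _))
    Finset.univ_nonempty) _
  rcases hα with ⟨hα0, hα1⟩ | hα1
  · exact mul_le_mul_of_nonpos_left (Real.log_le_log (hρ.Faz_pos hσ ha0 hs0 α z)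
      (hρ.Faz_le_FazC hσ ha hs ha0 hs0 hα0 hα1.le hz))
      (div_nonpos_of_nonneg_of_nonpos hα0.le (by linarith))
  · exact mul_le_mul_of_nonneg_left (Real.log_le_log FazC_pos
      (hρ.FazC_le_Faz hσ ha hs ha0 hs0 hα1.le hz)) (div_nonneg (by linarith) (by linarith))

end HasEigenvalues

end Fidelity

theorem stmt_8_general {d : ℕ} [NeZero d] {ρ σ : Matrix (Fin d) (Fin d) ℂ} (hρ : ρ.PosDef)
    (hσ : σ.PosDef) {α z : ℝ} (hα : α ∈ Set.Ioo 0 1 ∨ 1 < α) (hz : 0 < z) :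
    IsLeast {x : ℝ | ∃ U ∈ unitaryGroup (Fin d) ℂ, x = Saz ρ (U * σ * star U) α z}
      (SazC (eigDown hρ.1) (eigDown hσ.1) α) := by
  have hρ_eig : HasEigenvalues ρ (eigDown hρ.1) := (hasEigenvalues_eigenvalues hρ.1).sortDown
  have hσ_eig : HasEigenvalues σ (eigDown hσ.1) := (hasEigenvalues_eigenvalues hσ.1).sortDown
  have ha0 := hρ_eig.posDef_iff.1 hρ
  have hs0 := hσ_eig.posDef_iff.1 hσ
  constructor
  · obtain ⟨U, hU⟩ := hρ_eig
    obtain ⟨V, hV⟩ := hσ_eig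
    have conj_σ := conj_unitaryDiagonal (U * star V) V (eigDown hσ.1)
    rw [mul_assoc U, Unitary.star_mul_self, mul_one, hV] at conj_σ
    refine ⟨_, (U * star V).2, ?_⟩
    rw [conj_σ, Saz, SazC, ← Faz_unitaryDiagonal U (fun i ↦ (ha0 i).le) hs0 hz.ne', hU]
  · rintro _ ⟨W, hW, rfl⟩
    exact hρ_eig.SazC_le_Saz (hσ_eig.conj ⟨W, hW⟩) (antitone_sortDown _) (antitone_sortDown _)
      ha0 hs0 hα hz

/-- for positive definite density matrices `ρ, σ` and `(α,z)` with either
`α ∈ (0,1)∪(1,∞)` and `z ∈ (0,1)`, or `1 < α ≤ 2, α/2 ≤ z ≤ α`, or `2 ≤ α, α−1 ≤ z ≤ α`,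
the minimum of `S_{α,z}(ρ‖UσU*)` over unitaries `U` equals `S_α^C(λ↓(ρ)‖λ↓(σ))`. -/
theorem stmt_8 {d : ℕ} (ρ σ : Matrix (Fin d) (Fin d) ℂ)
    (hρ : ρ.PosDef) (hσ : σ.PosDef) (hρ1 : ρ.trace = 1) (hσ1 : σ.trace = 1)
    (α z : ℝ)
    (hαz : ((α ∈ Set.Ioo (0 : ℝ) 1 ∨ 1 < α) ∧ z ∈ Set.Ioo (0 : ℝ) 1) ∨
           (1 < α ∧ α ≤ 2 ∧ α / 2 ≤ z ∧ z ≤ α) ∨ (2 ≤ α ∧ α - 1 ≤ z ∧ z ≤ α)) :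
    IsLeast {x : ℝ | ∃ U ∈ Matrix.unitaryGroup (Fin d) ℂ,
        x = Saz ρ (U * σ * star U) α z}
      (SazC (eigDown hρ.1) (eigDown hσ.1) α) := by
  have : NeZero d := ⟨by rintro rfl; simp at hρ1⟩
  have hα : α ∈ Set.Ioo 0 1 ∨ 1 < α := by
    rcases hαz with ⟨hα, -⟩ | ⟨hα, -⟩ | ⟨hα, -⟩
    · exact hα
    · exact .inr hα
    · exact .inr (by linarith)
  have hz : 0 < z := by
    rcases hαz with ⟨-, hz, -⟩ | ⟨hα, -, hz, -⟩ | ⟨hα, hz, -⟩ <;> linarith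
  exact stmt_8_general hρ hσ hα hz
end

section
/- Let α ∈ (0,1) and let p, q, q' ∈ ℝ^d be probability vectors with strictly positive entries such that q' is majorized by q. Then Σ_{j=1}^d (p↑_j)^α (q'↓_j)^{1−α} ≥ Σ_{j=1}^d (p↑_j)^α (q↓_j)^{1−α}, where p↑ is p sorted increasingly and q↓, q'↓ are q, q' sorted decreasingly. (Applied with q' = λ(Φ(σ)) and q = λ(σ), where Φ(σ) is majorized by σ for any unital quantum channel Φ, this gives F_α^C(λ↑(ρ), λ↓(Φ(σ))) ≥ F_α^C(λ↑(ρ), λ↓(σ)).) -/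
open Matrix
open scoped ComplexOrder

/-- `q'` is majorized by `q`: for every `k`, the sum of the `k` largest entries of `q'`
is at most the sum of the `k` largest entries of `q`, with equal total sums. -/
def MajorizedBy {d : ℕ} (q' q : Fin d → ℝ) : Prop :=
  (∀ k : ℕ,
      ∑ j ∈ Finset.univ.filter (fun j : Fin d => (j : ℕ) < k), sortDown q' j ≤
        ∑ j ∈ Finset.univ.filter (fun j : Fin d => (j : ℕ) < k), sortDown q j) ∧
    ∑ j, q' j = ∑ j, q j

/-! Let `x`, `y` be the decreasing rearrangements of `q`, `q'`, let `w` be an increasing nonnegative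
weight and `f` a monotone concave function. A nonnegative decreasing supergradient `g` of `f` gives
`w j * f (x j) ≤ w j * f (y j) + w j * g (y j) * (x j - y j)`. The coefficients `w j * g (y j)`
increase with `j`, while the partial sums of `x - y` are nonnegative and end at `0`, so summation by
parts makes the total correction nonpositive. The theorem is the case `f t = t ^ (1 - α)` and
`w j = (p↑ j) ^ α`. -/

section SummationByParts

variable {ι R : Type*} [LinearOrder ι] [Ring R] [PartialOrder R] [IsOrderedRing R] {c z : ι → R}

theorem sum_mul_le_mul_sum_of_partialSums_nonneg (s : Finset ι) (hc : MonotoneOn c s)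
    (hz : ∀ a ∈ s, 0 ≤ ∑ j ∈ s with j ≤ a, z j) {C : R} (hC : ∀ j ∈ s, c j ≤ C) :
    ∑ j ∈ s, c j * z j ≤ C * ∑ j ∈ s, z j := by
  induction s using Finset.induction_on_max generalizing C with
  | empty => simp
  | insert m s hm ih =>
    have hms : m ∉ s := fun h => (hm m h).false
    have hz_s : ∀ a ∈ s, 0 ≤ ∑ j ∈ s with j ≤ a, z j := by
      intro a ha
      simpa [Finset.filter_insert, (hm a ha).not_ge] using hz a (Finset.mem_insert_of_mem ha)
    have hsum_nonneg : 0 ≤ ∑ j ∈ insert m s, z j := by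
      have hle : ∀ j ∈ insert m s, j ≤ m := by
        simpa using fun j hj => (hm j hj).le
      simpa only [Finset.filter_true_of_mem hle] using hz m (Finset.mem_insert_self m s)
    have ih_m : ∑ j ∈ s, c j * z j ≤ c m * ∑ j ∈ s, z j :=
      ih (hc.mono (by simp)) hz_s fun j hj => hc (by simp [hj]) (by simp) (hm j hj).le
    calc ∑ j ∈ insert m s, c j * z j = c m * z m + ∑ j ∈ s, c j * z j := Finset.sum_insert hms
      _ ≤ c m * z m + c m * ∑ j ∈ s, z j := by gcongr
      _ = c m * ∑ j ∈ insert m s, z j := by rw [Finset.sum_insert hms, mul_add]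
      _ ≤ C * ∑ j ∈ insert m s, z j :=
        mul_le_mul_of_nonneg_right (hC m (Finset.mem_insert_self m s)) hsum_nonneg

end SummationByParts

section Supergradient

variable {s : Set ℝ} {f : ℝ → ℝ}

theorem antitoneOn_slope_max (hf : ConcaveOn ℝ s f) (hmono : MonotoneOn f s) {u : ℝ} (hu : u ∈ s) :
    AntitoneOn (fun y => slope f y (max y u)) s := by
  intro y hy y' hy' hyy'
  dsimp only
  rcases le_or_gt u y' with huy' | huy'
  · rw [max_eq_left huy', slope_same]
    exact hmono.slope_nonneg hy (max_rec' (· ∈ s) hy hu)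
  · have hyu : y < u := hyy'.trans_lt huy'
    rw [max_eq_right huy'.le, max_eq_right hyu.le, slope_comm f y', slope_comm f y]
    exact hf.slope_anti hu ⟨hy, hyu.ne⟩ ⟨hy', huy'.ne⟩ hyy'

/- A genuine supergradient may be infinite at an endpoint of `s` (as for `t ^ r` at `0`). Testing
against finitely many points only, the largest slope from `y` to a point on its right will do. -/
theorem exists_antitoneOn_supergradient {ι : Type*} [Finite ι] (hf : ConcaveOn ℝ s f)
    (hmono : MonotoneOn f s) {x : ι → ℝ} (hx : ∀ i, x i ∈ s) :
    ∃ g : ℝ → ℝ, AntitoneOn g s ∧ (∀ y ∈ s, 0 ≤ g y) ∧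
      ∀ i, ∀ y ∈ s, f (x i) ≤ f y + g y * (x i - y) := by
  let g : ℝ → ℝ := fun y => ⨆ i, slope f y (max y (x i))
  have hslope_le (y : ℝ) (i : ι) : slope f y (max y (x i)) ≤ g y :=
    le_ciSup (Set.finite_range fun i => slope f y (max y (x i))).bddAbove i
  have hg_nonneg (y : ℝ) (hy : y ∈ s) : 0 ≤ g y :=
    Real.iSup_nonneg fun i => hmono.slope_nonneg hy (max_rec' (· ∈ s) hy (hx i))
  refine ⟨g, fun y hy y' hy' hyy' => ?_, hg_nonneg, fun i y hy => ?_⟩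
  · exact Real.iSup_le
      (fun i => (antitoneOn_slope_max hf hmono (hx i) hy hy' hyy').trans (hslope_le y i))
      (hg_nonneg y hy)
  · have hsecant : f (x i) = f y + slope f y (x i) * (x i - y) := by
      have h := sub_smul_slope f y (x i)
      rw [smul_eq_mul, vsub_eq_sub] at h
      linarith
    rw [hsecant]
    gcongr f y + ?_
    rcases le_or_gt y (x i) with hyx | hxy
    · have hle : slope f y (x i) ≤ g y := by simpa only [max_eq_right hyx] using hslope_le y i
      exact mul_le_mul_of_nonneg_right hle (sub_nonneg.2 hyx)
    · have hge : g y ≤ slope f y (x i) := by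
        refine Real.iSup_le (fun k => ?_) (hmono.slope_nonneg hy (hx i))
        rcases le_or_gt (x k) y with hky | hky
        · rw [max_eq_left hky, slope_same]
          exact hmono.slope_nonneg hy (hx i)
        · rw [max_eq_right hky.le]
          exact hf.slope_anti hy ⟨hx i, hxy.ne⟩ ⟨hx k, hky.ne'⟩ (hxy.trans hky).le
      exact mul_le_mul_of_nonpos_right hge (sub_nonpos.2 hxy.le)

end Supergradient

theorem sum_mul_concave_le_sum_mul_concave_of_partialSums_le {ι : Type*} [Fintype ι]
    [LinearOrder ι] {s : Set ℝ} {f : ℝ → ℝ} (hf : ConcaveOn ℝ s f) (hmono : MonotoneOn f s)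
    {w x y : ι → ℝ} (hw : Monotone w) (hw_nonneg : ∀ j, 0 ≤ w j) (hx : ∀ j, x j ∈ s)
    (hy : ∀ j, y j ∈ s) (hy_anti : Antitone y)
    (hpartial : ∀ a, ∑ j with j ≤ a, y j ≤ ∑ j with j ≤ a, x j) (hsum : ∑ j, y j = ∑ j, x j) :
    ∑ j, w j * f (x j) ≤ ∑ j, w j * f (y j) := by
  obtain ⟨g, hg_anti, hg_nonneg, hg⟩ := exists_antitoneOn_supergradient hf hmono hx
  let c : ι → ℝ := fun j => w j * g (y j)
  have hc : Monotone c :=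
    hw.mul (fun i j hij => hg_anti (hy j) (hy i) (hy_anti hij)) hw_nonneg
      fun j => hg_nonneg _ (hy j)
  obtain ⟨C, hC⟩ := (Set.finite_range c).bddAbove
  have hcorrection : ∑ j, c j * (x j - y j) ≤ 0 := by
    have hpartial_nonneg (a : ι) : 0 ≤ ∑ j with j ≤ a, (x j - y j) := by
      simpa only [Finset.sum_sub_distrib, sub_nonneg] using hpartial a
    calc ∑ j, c j * (x j - y j) ≤ C * ∑ j, (x j - y j) :=
          sum_mul_le_mul_sum_of_partialSums_nonneg Finset.univ (hc.monotoneOn _)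
            (fun a _ => hpartial_nonneg a) fun j _ => hC ⟨j, rfl⟩
      _ = 0 := by rw [Finset.sum_sub_distrib, hsum, sub_self, mul_zero]
  calc ∑ j, w j * f (x j) ≤ ∑ j, w j * (f (y j) + g (y j) * (x j - y j)) :=
        Finset.sum_le_sum fun j _ => mul_le_mul_of_nonneg_left (hg j _ (hy j)) (hw_nonneg j)
    _ = ∑ j, w j * f (y j) + ∑ j, c j * (x j - y j) := by
        simp only [c, mul_add, mul_assoc, Finset.sum_add_distrib]
    _ ≤ ∑ j, w j * f (y j) := by linarith

section Sorting

variable {d : ℕ} (v : Fin d → ℝ)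

theorem sortUp_monotone : Monotone (sortUp v) :=
  Tuple.monotone_sort v

theorem sortDown_antitone : Antitone (sortDown v) :=
  (sortUp_monotone v).comp_antitone Fin.rev_anti

theorem sum_sortDown : ∑ j, sortDown v j = ∑ j, v j :=
  (Equiv.sum_comp Fin.revPerm (sortUp v)).trans (Equiv.sum_comp (Tuple.sort v) v)

end Sorting

theorem MajorizedBy.partialSums_sortDown_le {d : ℕ} {q' q : Fin d → ℝ} (h : MajorizedBy q' q)
    (a : Fin d) : ∑ j with j ≤ a, sortDown q' j ≤ ∑ j with j ≤ a, sortDown q j := by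
  simpa only [Nat.lt_succ_iff, Fin.val_fin_le] using h.1 (a + 1)

theorem stmt_9_general {d : ℕ} (α : ℝ) (hα : α ∈ Set.Icc (0 : ℝ) 1) (p q q' : Fin d → ℝ)
    (hp : ∀ i, 0 ≤ p i) (hq : ∀ i, 0 ≤ q i) (hq' : ∀ i, 0 ≤ q' i) (hmaj : MajorizedBy q' q) :
    ∑ j, sortUp p j ^ α * sortDown q j ^ (1 - α) ≤
      ∑ j, sortUp p j ^ α * sortDown q' j ^ (1 - α) := by
  obtain ⟨hα_nonneg, hα_le_one⟩ := hα
  have hweight : Monotone fun j => sortUp p j ^ α :=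
    fun i j hij => Real.rpow_le_rpow (hp _) (sortUp_monotone p hij) hα_nonneg
  exact sum_mul_concave_le_sum_mul_concave_of_partialSums_le (s := Set.Ici 0)
    (Real.concaveOn_rpow (sub_nonneg.2 hα_le_one) (sub_le_self 1 hα_nonneg))
    (Real.monotoneOn_rpow_Ici_of_exponent_nonneg (sub_nonneg.2 hα_le_one))
    hweight (fun j => Real.rpow_nonneg (hp _) α) (fun _ => hq _) (fun _ => hq' _)
    (sortDown_antitone q') hmaj.partialSums_sortDown_le
    (by rw [sum_sortDown, sum_sortDown, hmaj.2])

/-- for `α ∈ (0,1)` and probability vectors `p, q, q'` with positive entries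
such that `q'` is majorized by `q`,
`Σ_j (p↑_j)^α (q'↓_j)^{1−α} ≥ Σ_j (p↑_j)^α (q↓_j)^{1−α}`. -/
theorem stmt_9 {d : ℕ} (α : ℝ) (hα : α ∈ Set.Ioo (0 : ℝ) 1)
    (p q q' : Fin d → ℝ)
    (hp : ∀ i, 0 < p i) (hq : ∀ i, 0 < q i) (hq' : ∀ i, 0 < q' i)
    (hps : ∑ i, p i = 1) (hqs : ∑ i, q i = 1) (hq's : ∑ i, q' i = 1)
    (hmaj : MajorizedBy q' q) :
    ∑ j, sortUp p j ^ α * sortDown q j ^ (1 - α) ≤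
      ∑ j, sortUp p j ^ α * sortDown q' j ^ (1 - α) := by
  exact stmt_9_general α (Set.Ioo_subset_Icc_self hα) p q q' (fun i => (hp i).le)
    (fun i => (hq i).le) (fun i => (hq' i).le) hmaj
end

section
/- Let ρ and σ be positive definite d×d density matrices and let (α,z) satisfy 0 < α < 1 and z ≥ max{α, 1−α}. Then the minimum of F_{α,z}(ρ, Σ_i p_i U_i σ U_i*) over all mixed unitary channels — i.e., over all finite families of d×d unitary matrices U_i and weights p_i ≥ 0 with Σ_i p_i = 1 — equals F_α^C(λ↓(ρ), λ↑(σ)), and it is attained by a single unitary conjugation. -/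
open Matrix
open scoped ComplexOrder

/-!
By the spectral theorem every Hermitian matrix is `U diag(x) U*`, and simultaneously diagonal
matrices with oppositely ordered spectra attain the value `F_α^C(λ↓(ρ), λ↑(σ))`. For the lower
bound, let `t` be the increasing spectrum of the output `τ` of the channel.

* `t = D s` with `D` doubly stochastic and `s` the increasing spectrum of `σ`, so Jensen and the
  rearrangement inequality (through Birkhoff's theorem) give
  `F_α^C(λ↓(ρ), s) ≤ F_α^C(λ↓(ρ), t)`.
* `F_α^C(λ↓(ρ), t) ≤ F_{α,z}(ρ, τ)` is a trace inequality `∑ (a i * g i ^ 2) ^ z ≤ tr (G A G) ^ z`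
  for `a` the decreasing spectrum of `A` and `g` the increasing spectrum of `G`. The matrix
  `E = G⁻¹ max(1, G A G) G⁻¹` dominates both `A` and `G⁻²`, so Weyl's monotonicity principle bounds
  its spectrum below, and comparing determinants gives a multiplicative inequality between
  `a i * g i ^ 2` and the spectrum of `G A G`. Applied to the rescalings `exp θ • A`, it becomes
  the trace inequality after taking logarithms and integrating against `exp (-z θ)`.
-/

section WeakLogMajorization

open Real MeasureTheory

lemma integral_posLog_exp_mul_exp_neg {z : ℝ} (hz : 0 < z) :
    ∫ θ, log⁺ (exp θ) * exp (-(z * θ)) = z⁻¹ ^ 2 := by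
  have hsupport : (fun θ ↦ log⁺ (exp θ) * exp (-(z * θ))) =
      (Set.Ioi 0).indicator fun θ ↦ θ ^ ((2 : ℝ) - 1) * exp (-(z * θ)) := by
    ext θ
    rcases lt_or_ge 0 θ with hθ | hθ
    · rw [Set.indicator_of_mem (by exact hθ), posLog_apply, log_exp, max_eq_right hθ.le]
      norm_num
    · rw [Set.indicator_of_notMem (by simpa using hθ), posLog_apply, log_exp, max_eq_left hθ,
        zero_mul]
  rw [hsupport, integral_indicator measurableSet_Ioi,
    integral_rpow_mul_exp_neg_mul_Ioi two_pos hz, Gamma_two, mul_one, one_div, rpow_two]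

lemma integral_posLog_exp_mul {x z : ℝ} (hx : 0 ≤ x) (hz : 0 < z) :
    ∫ θ, log⁺ (exp θ * x) * exp (-(z * θ)) = x ^ z * z⁻¹ ^ 2 := by
  rcases hx.eq_or_lt with rfl | hx
  · simp [zero_rpow hz.ne']
  have hshift (θ : ℝ) : log⁺ (exp θ * x) * exp (-(z * θ)) =
      x ^ z * (log⁺ (exp (θ + log x)) * exp (-(z * (θ + log x)))) := by
    rw [exp_add, exp_log hx, rpow_def_of_pos hx, mul_left_comm, ← exp_add]
    congr 2
    ring
  simp_rw [hshift]
  rw [integral_const_mul,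
    integral_add_right_eq_self (fun θ ↦ log⁺ (exp θ) * exp (-(z * θ))) (log x),
    integral_posLog_exp_mul_exp_neg hz]

lemma integrable_posLog_exp_mul {x z : ℝ} (hx : 0 ≤ x) (hz : 0 < z) :
    Integrable fun θ ↦ log⁺ (exp θ * x) * exp (-(z * θ)) := by
  rcases hx.eq_or_lt with rfl | hx
  · simp
  · refine .of_integral_ne_zero ?_
    rw [integral_posLog_exp_mul hx.le hz]
    positivity

/- The hypothesis is weak log-majorization of `x` by `y`. -/
lemma sum_rpow_le_sum_rpow_of_prod_max_one_le {ι : Type*} [Fintype ι] {x y : ι → ℝ}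
    (hx : 0 ≤ x) (hy : 0 ≤ y)
    (h : ∀ s : ℝ, 0 < s → ∏ i, max 1 (s * x i) ≤ ∏ i, max 1 (s * y i)) {z : ℝ} (hz : 0 < z) :
    ∑ i, x i ^ z ≤ ∑ i, y i ^ z := by
  have sum_posLog {w : ι → ℝ} (hw : 0 ≤ w) (θ : ℝ) :
      ∑ i, log⁺ (exp θ * w i) = log (∏ i, max 1 (exp θ * w i)) := by
    rw [log_prod fun i _ ↦ (lt_max_of_lt_left one_pos).ne']
    exact Finset.sum_congr rfl fun i _ ↦
      posLog_eq_log_max_one (mul_nonneg (exp_pos θ).le (hw i))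
  have integrable_term {w : ι → ℝ} (hw : 0 ≤ w) (i : ι) :=
    integrable_posLog_exp_mul (hw i) hz
  have integral_sum {w : ι → ℝ} (hw : 0 ≤ w) :
      ∫ θ, ∑ i, log⁺ (exp θ * w i) * exp (-(z * θ)) = (∑ i, w i ^ z) * z⁻¹ ^ 2 := by
    rw [integral_finsetSum _ fun i _ ↦ integrable_term hw i, Finset.sum_mul]
    exact Finset.sum_congr rfl fun i _ ↦ integral_posLog_exp_mul (hw i) hz
  refine le_of_mul_le_mul_right ?_ (by positivity : 0 < z⁻¹ ^ 2)
  rw [← integral_sum hx, ← integral_sum hy]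
  refine integral_mono (integrable_finsetSum _ fun i _ ↦ integrable_term hx i)
    (integrable_finsetSum _ fun i _ ↦ integrable_term hy i) fun θ ↦ ?_
  simp only [← Finset.sum_mul, sum_posLog hx, sum_posLog hy]
  exact mul_le_mul_of_nonneg_right (log_le_log
    (Finset.prod_pos fun i _ ↦ lt_max_of_lt_left one_pos) (h _ (exp_pos θ))) (exp_pos _).le

end WeakLogMajorization

section WeightedSums

variable {n : Type*} [Fintype n] [LinearOrder n] {x w : n → ℝ} {i : n}

lemma mul_sum_le_sum_mul_of_support_le (hx : Antitone x) (hw : 0 ≤ w)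
    (hsupp : ∀ k, i < k → w k = 0) : x i * ∑ k, w k ≤ ∑ k, x k * w k := by
  rw [Finset.mul_sum]
  refine Finset.sum_le_sum fun k _ ↦ ?_
  rcases lt_or_ge i k with hk | hk
  · simp [hsupp k hk]
  · exact mul_le_mul_of_nonneg_right (hx hk) (hw k)

lemma sum_mul_le_mul_sum_of_le_support (hx : Antitone x) (hw : 0 ≤ w)
    (hsupp : ∀ k, k < i → w k = 0) : ∑ k, x k * w k ≤ x i * ∑ k, w k := by
  rw [Finset.mul_sum]
  refine Finset.sum_le_sum fun k _ ↦ ?_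
  rcases lt_or_ge k i with hk | hk
  · simp [hsupp k hk]
  · exact mul_le_mul_of_nonneg_right (hx hk) (hw k)

end WeightedSums

section ConjDiagonal

open scoped MatrixOrder

variable {𝕜 n : Type*} [RCLike 𝕜] [Fintype n] [DecidableEq n]

/-- The homomorphism `x ↦ U diag(x) U*` of real algebras determined by a unitary matrix `U`. Its
values are the Hermitian matrices for which the columns of `U` are eigenvectors; `x` is the
spectrum, indexed by the columns. -/
noncomputable def conjDiagonal (U : unitaryGroup n 𝕜) : (n → ℝ) →ₐ[ℝ] Matrix n n 𝕜 :=
  ((Unitary.conjStarAlgAut 𝕜 (Matrix n n 𝕜) U).toAlgEquiv.toAlgHom.restrictScalars ℝ).comp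
    ((diagonalAlgHom ℝ).comp (RCLike.ofRealAm.compLeft n))

variable (U V W : unitaryGroup n 𝕜) (x y : n → ℝ)

lemma conjDiagonal_apply :
    conjDiagonal U x = U * diagonal (fun i ↦ (x i : 𝕜)) * star (U : Matrix n n 𝕜) := rfl

lemma isHermitian_conjDiagonal : (conjDiagonal U x).IsHermitian := by
  rw [conjDiagonal_apply, star_eq_conjTranspose]
  refine isHermitian_mul_mul_conjTranspose _ ?_
  exact isHermitian_diagonal_of_self_adjoint _ (by ext; simp)

variable {x y} in
lemma conjDiagonal_mono (h : x ≤ y) : conjDiagonal U x ≤ conjDiagonal U y := by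
  rw [Matrix.le_iff, ← map_sub, conjDiagonal_apply, star_eq_conjTranspose]
  exact (PosSemidef.diagonal fun i ↦ by simpa using h i).mul_mul_conjTranspose_same _

lemma conjDiagonal_nonneg {x : n → ℝ} (hx : 0 ≤ x) : 0 ≤ conjDiagonal U x := by
  simpa only [map_zero] using conjDiagonal_mono U hx

lemma trace_conjDiagonal : (conjDiagonal U x).trace = ((∑ i, x i : ℝ) : 𝕜) := by
  rw [conjDiagonal_apply, trace_mul_cycle, UnitaryGroup.star_mul_self, one_mul, trace_diagonal]
  push_cast
  rfl

lemma det_conjDiagonal : (conjDiagonal U x).det = ((∏ i, x i : ℝ) : 𝕜) := by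
  rw [conjDiagonal_apply, det_mul, mul_comm, ← det_mul, ← mul_assoc, UnitaryGroup.star_mul_self,
    one_mul, det_diagonal]
  push_cast
  rfl

lemma conjDiagonal_mul_unitary :
    conjDiagonal (W * U) x = W * conjDiagonal U x * star (W : Matrix n n 𝕜) := by
  simp only [conjDiagonal_apply, UnitaryGroup.mul_val, star_mul, Matrix.mul_assoc]

/- Both sides are one polynomial of the common matrix: interpolate `f` on the two spectra. -/
variable {U V x y} in
lemma conjDiagonal_comp_congr (h : conjDiagonal U x = conjDiagonal V y) (f : ℝ → ℝ) :
    conjDiagonal U (f ∘ x) = conjDiagonal V (f ∘ y) := by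
  let s : Finset ℝ := Finset.univ.image x ∪ Finset.univ.image y
  let p := Lagrange.interpolate s id f
  have eval_p {r : ℝ} (hr : r ∈ s) : p.eval r = f r :=
    Lagrange.eval_interpolate_at_node f Function.injective_id.injOn hr
  have aeval_p {w : n → ℝ} (hw : ∀ i, w i ∈ s) : Polynomial.aeval w p = f ∘ w := by
    ext i
    rw [Function.comp_apply, ← eval_p (hw i), ← Polynomial.coe_aeval_eq_eval]
    exact (Polynomial.aeval_algHom_apply (Pi.evalAlgHom ℝ (fun _ ↦ ℝ) i) w p).symm
  rw [← aeval_p (w := x) (by simp [s]), ← aeval_p (w := y) (by simp [s]),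
    ← Polynomial.aeval_algHom_apply, ← Polynomial.aeval_algHom_apply, h]

lemma star_dotProduct_conjDiagonal_mulVec (v : n → 𝕜) :
    star v ⬝ᵥ (conjDiagonal U x *ᵥ v) =
      ((∑ i, x i * ‖(star (U : Matrix n n 𝕜) *ᵥ v) i‖ ^ 2 : ℝ) : 𝕜) := by
  have hv : star v ᵥ* (U : Matrix n n 𝕜) = star (star (U : Matrix n n 𝕜) *ᵥ v) := by
    rw [star_mulVec, star_eq_conjTranspose, conjTranspose_conjTranspose]
  rw [conjDiagonal_apply, ← mulVec_mulVec, ← mulVec_mulVec, dotProduct_mulVec, hv]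
  simp only [dotProduct, mulVec_diagonal, Pi.star_apply]
  push_cast
  refine Finset.sum_congr rfl fun i _ ↦ ?_
  rw [mul_left_comm, RCLike.star_def, RCLike.conj_mul]

lemma sum_norm_sq_star_mulVec_eq (v : n → 𝕜) :
    ∑ i, ‖(star (U : Matrix n n 𝕜) *ᵥ v) i‖ ^ 2 = ∑ i, ‖(star (V : Matrix n n 𝕜) *ᵥ v) i‖ ^ 2 := by
  have h := star_dotProduct_conjDiagonal_mulVec U 1 v
  rw [map_one, ← map_one (conjDiagonal V), star_dotProduct_conjDiagonal_mulVec,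
    RCLike.ofReal_inj] at h
  simpa only [Pi.one_apply, one_mul] using h.symm

lemma exists_conjDiagonal_comp_perm (π : Equiv.Perm n) :
    ∃ V : unitaryGroup n 𝕜, conjDiagonal V (x ∘ π) = conjDiagonal U x := by
  have hV : (U : Matrix n n 𝕜).submatrix id π ∈ unitaryGroup n 𝕜 := by
    rw [mem_unitaryGroup_iff', star_eq_conjTranspose, conjTranspose_submatrix,
      ← submatrix_mul _ _ _ _ _ Function.bijective_id, ← star_eq_conjTranspose,
      UnitaryGroup.star_mul_self, submatrix_one_equiv]
  refine ⟨⟨_, hV⟩, ?_⟩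
  ext i j
  simp only [conjDiagonal_apply, mul_apply (M := _ * _), mul_diagonal, Matrix.star_apply,
    submatrix_apply, id_eq, Function.comp_apply]
  exact Equiv.sum_comp π fun k ↦ (U : Matrix n n 𝕜) i k * (x k : 𝕜) * star ((U : Matrix n n 𝕜) j k)

lemma exists_conjDiagonal_eigenvalues_comp_perm {A : Matrix n n 𝕜} (hA : A.IsHermitian)
    (π : Equiv.Perm n) : ∃ U : unitaryGroup n 𝕜, conjDiagonal U (hA.eigenvalues ∘ π) = A := by
  obtain ⟨U, hU⟩ := exists_conjDiagonal_comp_perm hA.eigenvectorUnitary hA.eigenvalues π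
  exact ⟨U, hU.trans hA.spectral_theorem.symm⟩

end ConjDiagonal

section Weyl

open scoped MatrixOrder

variable {𝕜 n : Type*} [RCLike 𝕜] [Fintype n] [LinearOrder n]

lemma exists_ne_zero_mulVec_eq_zero_of_lt {K : Type*} [Field K] (M : Matrix n n K) (i : n) :
    ∃ u ≠ 0, (∀ k, i < k → u k = 0) ∧ ∀ j < i, (M *ᵥ u) j = 0 := by
  -- The constraints are the rows other than `i` of a square system, whose row `i` is left zero.
  let N : Matrix n n K := fun j ↦ if j < i then M j else if j = i then 0 else Pi.single j 1
  have hN : N.det = 0 := det_eq_zero_of_row_eq_zero i fun k ↦ by simp [N]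
  obtain ⟨u, hu, hNu⟩ := exists_mulVec_eq_zero_iff.2 hN
  refine ⟨u, hu, fun k hk ↦ ?_, fun j hj ↦ ?_⟩
  · simpa [N, mulVec, hk.not_gt, hk.ne'] using congrFun hNu k
  · simpa [N, mulVec, hj] using congrFun hNu j

lemma le_of_conjDiagonal_le_conjDiagonal {V W : unitaryGroup n 𝕜} {x y : n → ℝ}
    (hx : Antitone x) (hy : Antitone y) (h : conjDiagonal V x ≤ conjDiagonal W y) : x ≤ y := by
  intro i
  obtain ⟨u, hu, hu_supp, hWVu⟩ :=
    exists_ne_zero_mulVec_eq_zero_of_lt (star (W : Matrix n n 𝕜) * (V : Matrix n n 𝕜)) i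
  let v : n → 𝕜 := V *ᵥ u
  let coord (U : unitaryGroup n 𝕜) (k : n) : ℝ := ‖(star (U : Matrix n n 𝕜) *ᵥ v) k‖ ^ 2
  have coord_nonneg (U : unitaryGroup n 𝕜) : 0 ≤ coord U := fun k ↦ by positivity
  have hV : star (V : Matrix n n 𝕜) *ᵥ v = u := by
    rw [mulVec_mulVec, UnitaryGroup.star_mul_self, one_mulVec]
  have hV_supp (k : n) (hk : i < k) : coord V k = 0 := by simp [coord, hV, hu_supp k hk]
  have hW_supp (k : n) (hk : k < i) : coord W k = 0 := by
    simp [coord, v, mulVec_mulVec, hWVu k hk]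
  have sum_pos : 0 < ∑ k, coord V k := by
    obtain ⟨k, hk⟩ := Function.ne_iff.1 hu
    refine Finset.sum_pos' (fun k _ ↦ coord_nonneg V k) ⟨k, Finset.mem_univ k, ?_⟩
    simpa only [coord, hV] using pow_pos (norm_pos_iff.2 hk) 2
  have quadratic_le : ∑ k, x k * coord V k ≤ ∑ k, y k * coord W k := by
    have := (Matrix.le_iff.1 h).dotProduct_mulVec_nonneg v
    rwa [sub_mulVec, dotProduct_sub, star_dotProduct_conjDiagonal_mulVec,
      star_dotProduct_conjDiagonal_mulVec, sub_nonneg, RCLike.ofReal_le_ofReal] at this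
  refine le_of_mul_le_mul_right ?_ sum_pos
  calc x i * ∑ k, coord V k
      ≤ ∑ k, x k * coord V k := mul_sum_le_sum_mul_of_support_le hx (coord_nonneg V) hV_supp
    _ ≤ ∑ k, y k * coord W k := quadratic_le
    _ ≤ y i * ∑ k, coord W k := sum_mul_le_mul_sum_of_le_support hy (coord_nonneg W) hW_supp
    _ = y i * ∑ k, coord V k := by rw [sum_norm_sq_star_mulVec_eq W V v]

end Weyl

section TraceInequality

open scoped MatrixOrder

lemma exists_perm_antitone_comp {n α : Type*} [Finite n] [LinearOrder n] [LinearOrder α]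
    (x : n → α) : ∃ π : Equiv.Perm n, Antitone (x ∘ π) := by
  have := Fintype.ofFinite n
  let e := monoEquivOfFin n rfl
  let f : Fin (Fintype.card n) → αᵒᵈ := OrderDual.toDual ∘ x ∘ e
  exact ⟨(e.symm.toEquiv.trans (Tuple.sort f)).trans e.toEquiv,
    fun _ _ h ↦ Tuple.monotone_sort f (e.symm.monotone h)⟩

variable {𝕜 n : Type*} [RCLike 𝕜] [Fintype n] [LinearOrder n] {Z V W : unitaryGroup n 𝕜}
  {a c f g : n → ℝ}

lemma exists_conjDiagonal_antitone {A : Matrix n n 𝕜} (hA : A.IsHermitian) :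
    ∃ (U : unitaryGroup n 𝕜) (x : n → ℝ), Antitone x ∧ conjDiagonal U x = A := by
  obtain ⟨π, hπ⟩ := exists_perm_antitone_comp hA.eigenvalues
  obtain ⟨U, hU⟩ := exists_conjDiagonal_eigenvalues_comp_perm hA π
  exact ⟨U, _, hπ, hU⟩

lemma prod_max_sq_le_of_conjDiagonal_mul_mul_eq (ha : Antitone a) (hf : Antitone f) (hf₀ : 0 ≤ f)
    (h : conjDiagonal W f * conjDiagonal Z c * conjDiagonal W f = conjDiagonal V a) :
    ∏ i, max (f i ^ 2) (a i) ≤ ∏ i, f i ^ 2 * max 1 (c i) := by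
  have hW : IsSelfAdjoint (conjDiagonal W f) := isHermitian_conjDiagonal W f
  have hZ : IsSelfAdjoint (conjDiagonal Z (1 ⊔ c)) := isHermitian_conjDiagonal Z _
  obtain ⟨Q, ε, hε, hQ⟩ := exists_conjDiagonal_antitone (hZ.conjugate_self hW)
  have a_le : a ≤ ε := by
    refine le_of_conjDiagonal_le_conjDiagonal ha hε (V := V) (W := Q) ?_
    rw [hQ, ← h]
    exact hW.conjugate_le_conjugate (conjDiagonal_mono Z le_sup_right)
  have sq_le : f ^ 2 ≤ ε := by
    have hf_sq : Antitone (f ^ 2) := fun i j hij ↦ pow_le_pow_left₀ (hf₀ j) (hf hij) 2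
    refine le_of_conjDiagonal_le_conjDiagonal hf_sq hε (V := W) (W := Q) ?_
    have := hW.conjugate_le_conjugate (conjDiagonal_mono Z (le_sup_left : 1 ≤ 1 ⊔ c))
    rwa [map_one, mul_one, ← map_mul, ← sq, ← hQ] at this
  have prod_eq : ∏ i, ε i = ∏ i, f i ^ 2 * max 1 (c i) := by
    have hdet := congrArg det hQ
    simp only [det_mul, det_conjDiagonal, ← RCLike.ofReal_mul, RCLike.ofReal_inj,
      ← Finset.prod_mul_distrib] at hdet
    rw [hdet]
    exact Finset.prod_congr rfl fun i _ ↦ by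
      rw [Pi.sup_apply, Pi.one_apply]
      ring
  rw [← prod_eq]
  exact Finset.prod_le_prod (fun i _ ↦ (sq_nonneg _).trans (le_max_left _ _))
    fun i _ ↦ max_le (sq_le i) (a_le i)

lemma prod_max_one_le_of_conjDiagonal_mul_mul_eq (ha : Antitone a) (hg : Monotone g)
    (hg₀ : ∀ i, 0 < g i)
    (h : conjDiagonal W g * conjDiagonal V a * conjDiagonal W g = conjDiagonal Z c) :
    ∏ i, max 1 (a i * g i ^ 2) ≤ ∏ i, max 1 (c i) := by
  have hg_inv : g⁻¹ * g = 1 := funext fun i ↦ inv_mul_cancel₀ (hg₀ i).ne'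
  have h_inv : conjDiagonal W g⁻¹ * conjDiagonal Z c * conjDiagonal W g⁻¹ = conjDiagonal V a :=
    calc _ = conjDiagonal W (g⁻¹ * g) * conjDiagonal V a * conjDiagonal W (g * g⁻¹) := by
          rw [← h]
          simp only [map_mul, mul_assoc]
      _ = conjDiagonal V a := by rw [mul_comm g, hg_inv, map_one, one_mul, mul_one]
  have hg_inv_anti : Antitone g⁻¹ := fun i j hij ↦ inv_anti₀ (hg₀ i) (hg hij)
  have hsq_inv (i : n) : g⁻¹ i ^ 2 * g i ^ 2 = 1 := by
    rw [← mul_pow, ← Pi.mul_apply, hg_inv, Pi.one_apply, one_pow]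
  calc ∏ i, max 1 (a i * g i ^ 2)
      = (∏ i, max (g⁻¹ i ^ 2) (a i)) * ∏ i, g i ^ 2 := by
        rw [← Finset.prod_mul_distrib]
        exact Finset.prod_congr rfl fun i _ ↦ by rw [max_mul_of_nonneg _ _ (sq_nonneg _), hsq_inv]
    _ ≤ (∏ i, g⁻¹ i ^ 2 * max 1 (c i)) * ∏ i, g i ^ 2 :=
        mul_le_mul_of_nonneg_right (prod_max_sq_le_of_conjDiagonal_mul_mul_eq ha hg_inv_anti
          (fun i ↦ (inv_pos.2 (hg₀ i)).le) h_inv) (Finset.prod_nonneg fun i _ ↦ sq_nonneg _)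
    _ = ∏ i, max 1 (c i) := by
        rw [← Finset.prod_mul_distrib]
        exact Finset.prod_congr rfl fun i _ ↦ by rw [mul_right_comm, hsq_inv, one_mul]

lemma sum_rpow_le_of_conjDiagonal_mul_mul_eq (ha : Antitone a) (ha₀ : 0 ≤ a) (hg : Monotone g)
    (hg₀ : ∀ i, 0 < g i) (hc₀ : 0 ≤ c)
    (h : conjDiagonal W g * conjDiagonal V a * conjDiagonal W g = conjDiagonal Z c)
    {z : ℝ} (hz : 0 < z) : ∑ i, (a i * g i ^ 2) ^ z ≤ ∑ i, c i ^ z := by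
  refine sum_rpow_le_sum_rpow_of_prod_max_one_le (fun i ↦ mul_nonneg (ha₀ i) (sq_nonneg _)) hc₀
    (fun s hs ↦ ?_) hz
  have h_smul : conjDiagonal W g * conjDiagonal V (s • a) * conjDiagonal W g =
      conjDiagonal Z (s • c) := by
    rw [map_smul, map_smul, mul_smul_comm, smul_mul_assoc, h]
  simpa only [Pi.smul_apply, smul_eq_mul, mul_assoc] using
    prod_max_one_le_of_conjDiagonal_mul_mul_eq (ha.const_mul hs.le) hg hg₀ h_smul

end TraceInequality

section Fidelity

variable {d : ℕ} {V W : unitaryGroup (Fin d) ℂ} {r s : Fin d → ℝ} {α z : ℝ}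

lemma mpow_conjDiagonal (U : unitaryGroup (Fin d) ℂ) (x : Fin d → ℝ) (t : ℝ) :
    mpow (conjDiagonal U x) t = conjDiagonal U fun i ↦ x i ^ t := by
  have hA := isHermitian_conjDiagonal U x
  rw [mpow, dif_pos hA]
  exact conjDiagonal_comp_congr (U := hA.eigenvectorUnitary) hA.spectral_theorem.symm (· ^ t)

lemma re_trace_mpow_conjDiagonal (U : unitaryGroup (Fin d) ℂ) (x : Fin d → ℝ) (t : ℝ) :
    (mpow (conjDiagonal U x) t).trace.re = ∑ i, x i ^ t := by
  rw [mpow_conjDiagonal, trace_conjDiagonal]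
  exact Complex.ofReal_re _

lemma rpow_mul_sq_rpow_rpow {a b : ℝ} (ha : 0 ≤ a) (hb : 0 ≤ b) (hz : z ≠ 0) :
    (a ^ (α / z) * (b ^ ((1 - α) / (2 * z))) ^ 2) ^ z = a ^ α * b ^ (1 - α) := by
  rw [Real.mul_rpow (by positivity) (by positivity), ← Real.rpow_mul ha, ← Real.rpow_natCast,
    ← Real.rpow_mul hb, ← Real.rpow_mul hb]
  congr 2 <;> push_cast <;> field_simp

lemma Faz_conjDiagonal_self (V : unitaryGroup (Fin d) ℂ) (hr : 0 ≤ r) (hs : 0 ≤ s) (hz : z ≠ 0) :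
    Faz (conjDiagonal V r) (conjDiagonal V s) α z = FazC r s α := by
  rw [Faz, FazC, mpow_conjDiagonal, mpow_conjDiagonal, ← map_mul, ← map_mul,
    re_trace_mpow_conjDiagonal]
  congr! 2 with i
  rw [← rpow_mul_sq_rpow_rpow (hr i) (hs i) hz]
  simp only [Pi.mul_apply]
  congr 1
  ring

lemma FazC_le_Faz_conjDiagonal (hr : Antitone r) (hr₀ : 0 ≤ r) (hs : Monotone s)
    (hs₀ : ∀ i, 0 < s i) (hα : α ∈ Set.Ioc 0 1) (hz : 0 < z) :
    FazC r s α ≤ Faz (conjDiagonal V r) (conjDiagonal W s) α z := by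
  let a : Fin d → ℝ := fun i ↦ r i ^ (α / z)
  let g : Fin d → ℝ := fun i ↦ s i ^ ((1 - α) / (2 * z))
  have ha : Antitone a := fun i j hij ↦
    Real.rpow_le_rpow (hr₀ j) (hr hij) (div_nonneg hα.1.le hz.le)
  have ha₀ : 0 ≤ a := fun i ↦ Real.rpow_nonneg (hr₀ i) _
  have hg : Monotone g := fun i j hij ↦
    Real.rpow_le_rpow (hs₀ i).le (hs hij) (div_nonneg (sub_nonneg.2 hα.2) (by positivity))
  have hg₀ (i : Fin d) : 0 < g i := Real.rpow_pos_of_pos (hs₀ i) _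
  have hC : (conjDiagonal W g * conjDiagonal V a * conjDiagonal W g).PosSemidef := by
    have := (conjDiagonal_nonneg V ha₀).posSemidef.mul_mul_conjTranspose_same (conjDiagonal W g)
    rwa [isHermitian_conjDiagonal] at this
  rw [FazC, Faz, mpow_conjDiagonal, mpow_conjDiagonal]
  refine Real.rpow_le_rpow (Finset.sum_nonneg fun i _ ↦ mul_nonneg (Real.rpow_nonneg (hr₀ i) _)
    (Real.rpow_nonneg (hs₀ i).le _)) ?_ (by simpa using hα.1.le)
  calc ∑ i, r i ^ α * s i ^ (1 - α)
      = ∑ i, (a i * g i ^ 2) ^ z := Finset.sum_congr rfl fun i _ ↦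
        (rpow_mul_sq_rpow_rpow (hr₀ i) (hs₀ i).le hz.ne').symm
    _ ≤ ∑ i, hC.1.eigenvalues i ^ z := sum_rpow_le_of_conjDiagonal_mul_mul_eq ha ha₀ hg hg₀
        hC.eigenvalues_nonneg hC.1.spectral_theorem hz
    _ = (mpow (conjDiagonal W g * conjDiagonal V a * conjDiagonal W g) z).trace.re := by
        rw [← re_trace_mpow_conjDiagonal hC.1.eigenvectorUnitary]
        exact congrArg (fun C ↦ (mpow C z).trace.re) hC.1.spectral_theorem.symm

end Fidelity

section DoublyStochastic

variable {n : Type*} [Fintype n] [DecidableEq n]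

lemma dotProduct_le_dotProduct_mulVec_of_antivary {R : Type*} [Field R] [LinearOrder R]
    [IsStrictOrderedRing R] {D : Matrix n n R} (hD : D ∈ doublyStochastic R n) {a b : n → R}
    (hab : Antivary a b) : a ⬝ᵥ b ≤ a ⬝ᵥ (D *ᵥ b) := by
  obtain ⟨w, hw, hw_sum, rfl⟩ := exists_eq_sum_perm_of_mem_doublyStochastic hD
  simp only [sum_mulVec, smul_mulVec, dotProduct_sum, dotProduct_smul, permMatrix_mulVec]
  calc a ⬝ᵥ b = ∑ π, w π • (a ⬝ᵥ b) := by rw [← Finset.sum_smul, hw_sum, one_smul]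
    _ ≤ ∑ π, w π • (a ⬝ᵥ (b ∘ π)) := Finset.sum_le_sum fun π _ ↦
        smul_le_smul_of_nonneg_left hab.sum_mul_le_sum_mul_comp_perm (hw π)

lemma mulVec_pos_of_mem_doublyStochastic {D : Matrix n n ℝ} (hD : D ∈ doublyStochastic ℝ n)
    {s : n → ℝ} (hs : ∀ i, 0 < s i) (i : n) : 0 < (D *ᵥ s) i := by
  obtain ⟨h0, hrow, -⟩ := mem_doublyStochastic_iff_sum.1 hD
  exact (convex_Ioi (0 : ℝ)).sum_mem (fun k _ ↦ h0 i k) (hrow i) fun k _ ↦ hs k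

lemma mulVec_rpow_le_rpow_mulVec {D : Matrix n n ℝ} (hD : D ∈ doublyStochastic ℝ n)
    {s : n → ℝ} (hs : 0 ≤ s) {t : ℝ} (ht : t ∈ Set.Icc 0 1) (i : n) :
    (D *ᵥ fun k ↦ s k ^ t) i ≤ (D *ᵥ s) i ^ t := by
  obtain ⟨h0, hrow, -⟩ := mem_doublyStochastic_iff_sum.1 hD
  exact (Real.concaveOn_rpow ht.1 ht.2).le_map_sum (fun k _ ↦ h0 i k) (hrow i) fun k _ ↦ hs k

lemma FazC_le_FazC_mulVec {d : ℕ} {D : Matrix (Fin d) (Fin d) ℝ}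
    (hD : D ∈ doublyStochastic ℝ (Fin d)) {r s : Fin d → ℝ} (hr : Antitone r) (hr₀ : 0 ≤ r)
    (hs : Monotone s) (hs₀ : 0 ≤ s) {α : ℝ} (hα : α ∈ Set.Ioc 0 1) :
    FazC r s α ≤ FazC r (D *ᵥ s) α := by
  have hα' : 0 ≤ 1 - α := sub_nonneg.2 hα.2
  have hr_rpow : Antitone fun i ↦ r i ^ α := fun i j hij ↦
    Real.rpow_le_rpow (hr₀ j) (hr hij) hα.1.le
  have hs_rpow : Monotone fun i ↦ s i ^ (1 - α) := fun i j hij ↦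
    Real.rpow_le_rpow (hs₀ i) (hs hij) hα'
  refine Real.rpow_le_rpow (Finset.sum_nonneg fun i _ ↦ mul_nonneg (Real.rpow_nonneg (hr₀ i) _)
    (Real.rpow_nonneg (hs₀ i) _)) ?_ (by simpa using hα.1.le)
  calc ∑ i, r i ^ α * s i ^ (1 - α)
      ≤ ∑ i, r i ^ α * (D *ᵥ fun k ↦ s k ^ (1 - α)) i :=
        dotProduct_le_dotProduct_mulVec_of_antivary hD (hr_rpow.antivary hs_rpow)
    _ ≤ ∑ i, r i ^ α * (D *ᵥ s) i ^ (1 - α) := Finset.sum_le_sum fun i _ ↦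
        mul_le_mul_of_nonneg_left
          (mulVec_rpow_le_rpow_mulVec hD hs₀ ⟨hα', sub_le_self 1 hα.1.le⟩ i)
          (Real.rpow_nonneg (hr₀ i) _)

end DoublyStochastic

section MixedUnitary

variable {𝕜 n ι : Type*} [RCLike 𝕜] [Fintype n] [DecidableEq n] [Fintype ι]

/-- The matrix of squared moduli of the entries of a unitary matrix, which sends the spectrum of
`conjDiagonal U s` to its diagonal. -/
def unistochastic (U : unitaryGroup n 𝕜) : Matrix n n ℝ := of fun i j ↦ ‖(U : Matrix n n 𝕜) i j‖ ^ 2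

lemma sum_unistochastic_row (U : unitaryGroup n 𝕜) (i : n) : ∑ j, unistochastic U i j = 1 := by
  have h : ((U : Matrix n n 𝕜) * star (U : Matrix n n 𝕜)) i i = 1 := by
    rw [mem_unitaryGroup_iff.1 U.2, one_apply_eq]
  simp only [mul_apply, star_apply, RCLike.star_def, RCLike.mul_conj] at h
  exact_mod_cast h

lemma unistochastic_inv (U : unitaryGroup n 𝕜) : unistochastic U⁻¹ = (unistochastic U)ᵀ := by
  ext i j
  simp [unistochastic]

lemma unistochastic_mem_doublyStochastic (U : unitaryGroup n 𝕜) :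
    unistochastic U ∈ doublyStochastic ℝ n := by
  refine mem_doublyStochastic_iff_sum.2
    ⟨fun i j ↦ sq_nonneg _, sum_unistochastic_row U, fun j ↦ ?_⟩
  simpa only [unistochastic_inv, transpose_apply] using sum_unistochastic_row U⁻¹ j

lemma conjDiagonal_diag (U : unitaryGroup n 𝕜) (s : n → ℝ) (i : n) :
    conjDiagonal U s i i = ((unistochastic U *ᵥ s) i : 𝕜) := by
  rw [conjDiagonal_apply, mul_apply]
  simp only [mul_diagonal, star_apply, mulVec, dotProduct, unistochastic, of_apply]
  push_cast
  exact Finset.sum_congr rfl fun k _ ↦ by rw [mul_right_comm, RCLike.star_def, RCLike.mul_conj]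

/-- The mixed unitary channel that conjugates by the unitary matrix `U i` with weight `p i`, applied
to `A`; it is a channel when `p` is a probability vector. -/
noncomputable def mixedUnitary (p : ι → ℝ) (U : ι → unitaryGroup n 𝕜) (A : Matrix n n 𝕜) :
    Matrix n n 𝕜 :=
  ∑ i, (p i : 𝕜) • ((U i : Matrix n n 𝕜) * A * star (U i : Matrix n n 𝕜))

lemma mixedUnitary_conjDiagonal (p : ι → ℝ) (U : ι → unitaryGroup n 𝕜) (S : unitaryGroup n 𝕜)
    (s : n → ℝ) :
    mixedUnitary p U (conjDiagonal S s) = ∑ i, (p i : 𝕜) • conjDiagonal (U i * S) s := by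
  simp only [mixedUnitary, conjDiagonal_mul_unitary]

lemma isHermitian_mixedUnitary (p : ι → ℝ) (U : ι → unitaryGroup n 𝕜) {A : Matrix n n 𝕜}
    (hA : A.IsHermitian) : (mixedUnitary p U A).IsHermitian :=
  isSelfAdjoint_sum _ fun i _ ↦ (isHermitian_mul_mul_conjTranspose (U i : Matrix n n 𝕜) hA).smul
    (RCLike.conj_ofReal (p i))

lemma exists_doublyStochastic_mulVec_eq_of_conjDiagonal_eq_mixedUnitary {p : ι → ℝ}
    (hp : ∀ i, 0 ≤ p i) (hp_sum : ∑ i, p i = 1) {U : ι → unitaryGroup n 𝕜}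
    {W S : unitaryGroup n 𝕜} {s t : n → ℝ}
    (h : conjDiagonal W t = mixedUnitary p U (conjDiagonal S s)) :
    ∃ D ∈ doublyStochastic ℝ n, D *ᵥ s = t := by
  have h_diagonal : diagonal (fun i ↦ (t i : 𝕜)) =
      ∑ i, (p i : 𝕜) • conjDiagonal (W⁻¹ * (U i * S)) s := by
    have conj_h := congrArg (fun A ↦ (W⁻¹ : unitaryGroup n 𝕜) * A *
      star ((W⁻¹ : unitaryGroup n 𝕜) : Matrix n n 𝕜)) h
    rw [mixedUnitary_conjDiagonal] at conj_h
    simp only [← conjDiagonal_mul_unitary, inv_mul_cancel, Matrix.mul_sum, Matrix.sum_mul,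
      Matrix.mul_smul, Matrix.smul_mul] at conj_h
    simpa [conjDiagonal_apply] using conj_h
  refine ⟨∑ i, p i • unistochastic (W⁻¹ * (U i * S)), convex_doublyStochastic.sum_mem
    (fun i _ ↦ hp i) hp_sum fun i _ ↦ unistochastic_mem_doublyStochastic _, funext fun j ↦ ?_⟩
  have h_diag := congrFun (congrFun h_diagonal j) j
  simp only [diagonal_apply_eq, Matrix.sum_apply, Matrix.smul_apply, conjDiagonal_diag, smul_eq_mul,
    ← RCLike.ofReal_mul, ← RCLike.ofReal_sum, RCLike.ofReal_inj] at h_diag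
  rw [h_diag]
  simp only [sum_mulVec, smul_mulVec, Finset.sum_apply, Pi.smul_apply, smul_eq_mul]

end MixedUnitary

section SortedEigenvalues

variable {d : ℕ} {A : Matrix (Fin d) (Fin d) ℂ}

lemma monotone_eigUp (hA : A.IsHermitian) : Monotone (eigUp hA) :=
  Tuple.monotone_sort _

lemma antitone_eigDown (hA : A.IsHermitian) : Antitone (eigDown hA) :=
  fun _ _ hij ↦ monotone_eigUp hA (Fin.rev_le_rev.2 hij)

lemma exists_conjDiagonal_eigUp (hA : A.IsHermitian) :
    ∃ U : unitaryGroup (Fin d) ℂ, conjDiagonal U (eigUp hA) = A :=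
  exists_conjDiagonal_eigenvalues_comp_perm hA _

lemma exists_conjDiagonal_eigDown (hA : A.IsHermitian) :
    ∃ U : unitaryGroup (Fin d) ℂ, conjDiagonal U (eigDown hA) = A :=
  exists_conjDiagonal_eigenvalues_comp_perm hA (Fin.revPerm.trans (Tuple.sort hA.eigenvalues))

end SortedEigenvalues

lemma exists_Faz_conj_eq_FazC {d : ℕ} {ρ σ : Matrix (Fin d) (Fin d) ℂ} (hρ : ρ.PosSemidef)
    (hσ : σ.PosSemidef) (α : ℝ) {z : ℝ} (hz : z ≠ 0) :
    ∃ U : unitaryGroup (Fin d) ℂ, Faz ρ (U * σ * star (U : Matrix (Fin d) (Fin d) ℂ)) α z =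
      FazC (eigDown hρ.1) (eigUp hσ.1) α := by
  obtain ⟨V, hV⟩ := exists_conjDiagonal_eigDown hρ.1
  obtain ⟨S, hS⟩ := exists_conjDiagonal_eigUp hσ.1
  refine ⟨V * S⁻¹, ?_⟩
  have h_conj : (V * S⁻¹ : unitaryGroup (Fin d) ℂ) * σ *
      star ((V * S⁻¹ : unitaryGroup (Fin d) ℂ) : Matrix (Fin d) (Fin d) ℂ) =
      conjDiagonal V (eigUp hσ.1) := by
    nth_rw 1 [← hS]
    rw [← conjDiagonal_mul_unitary, inv_mul_cancel_right]
  rw [h_conj]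
  nth_rw 1 [← hV]
  exact Faz_conjDiagonal_self V (fun i ↦ hρ.eigenvalues_nonneg _)
    (fun i ↦ hσ.eigenvalues_nonneg _) hz

lemma FazC_eig_le_Faz_mixedUnitary {d : ℕ} {ι : Type*} [Fintype ι]
    {ρ σ : Matrix (Fin d) (Fin d) ℂ} (hρ : ρ.PosSemidef) (hσ : σ.PosDef) {α z : ℝ}
    (hα : α ∈ Set.Ioc 0 1) (hz : 0 < z) {p : ι → ℝ} (hp : ∀ i, 0 ≤ p i) (hp_sum : ∑ i, p i = 1)
    (U : ι → unitaryGroup (Fin d) ℂ) :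
    FazC (eigDown hρ.1) (eigUp hσ.1) α ≤ Faz ρ (mixedUnitary p U σ) α z := by
  have hτ := isHermitian_mixedUnitary p U hσ.1
  obtain ⟨V, hV⟩ := exists_conjDiagonal_eigDown hρ.1
  obtain ⟨S, hS⟩ := exists_conjDiagonal_eigUp hσ.1
  obtain ⟨W, hW⟩ := exists_conjDiagonal_eigUp hτ
  obtain ⟨D, hD, hDs⟩ := exists_doublyStochastic_mulVec_eq_of_conjDiagonal_eq_mixedUnitary hp hp_sum
    (W := W) (S := S) (s := eigUp hσ.1) (t := eigUp hτ) (U := U) (by rw [hS, hW])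
  have hr₀ : 0 ≤ eigDown hρ.1 := fun i ↦ hρ.eigenvalues_nonneg _
  have hs₀ (i : Fin d) : 0 < eigUp hσ.1 i := hσ.eigenvalues_pos _
  have ht₀ : ∀ i, 0 < eigUp hτ i := hDs ▸ mulVec_pos_of_mem_doublyStochastic hD hs₀
  calc FazC (eigDown hρ.1) (eigUp hσ.1) α
      ≤ FazC (eigDown hρ.1) (D *ᵥ eigUp hσ.1) α := FazC_le_FazC_mulVec hD (antitone_eigDown hρ.1)
        hr₀ (monotone_eigUp hσ.1) (fun i ↦ (hs₀ i).le) hα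
    _ = FazC (eigDown hρ.1) (eigUp hτ) α := by rw [hDs]
    _ ≤ Faz (conjDiagonal V (eigDown hρ.1)) (conjDiagonal W (eigUp hτ)) α z :=
        FazC_le_Faz_conjDiagonal (antitone_eigDown hρ.1) hr₀ (monotone_eigUp hτ) ht₀ hα hz
    _ = Faz ρ (mixedUnitary p U σ) α z := by rw [hV, hW]

theorem stmt_15_general {d : ℕ} (ρ σ : Matrix (Fin d) (Fin d) ℂ)
    (hρ : ρ.PosSemidef) (hσ : σ.PosDef) (α z : ℝ) (hα : α ∈ Set.Ioc (0 : ℝ) 1) (hz : 0 < z) :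
    IsLeast {x : ℝ | ∃ (k : ℕ) (p : Fin k → ℝ)
        (U : Fin k → Matrix.unitaryGroup (Fin d) ℂ),
        (∀ i, 0 ≤ p i) ∧ ∑ i, p i = 1 ∧
        x = Faz ρ (∑ i, ((p i : ℝ) : ℂ) •
              ((U i : Matrix (Fin d) (Fin d) ℂ) * σ *
                star (U i : Matrix (Fin d) (Fin d) ℂ))) α z}
      (FazC (eigDown hρ.1) (eigUp hσ.1) α) ∧
    ∃ U ∈ Matrix.unitaryGroup (Fin d) ℂ,
      Faz ρ (U * σ * star U) α z = FazC (eigDown hρ.1) (eigUp hσ.1) α := by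
  obtain ⟨U, hU⟩ := exists_Faz_conj_eq_FazC hρ hσ.posSemidef α hz.ne'
  refine ⟨⟨⟨1, 1, fun _ ↦ U, fun _ ↦ zero_le_one, by simp, ?_⟩, ?_⟩, U, U.2, hU⟩
  · simpa using hU.symm
  · rintro _ ⟨k, p, V, hp, hp_sum, rfl⟩
    exact FazC_eig_le_Faz_mixedUnitary hρ hσ hα hz hp hp_sum V

/-- for positive definite density matrices `ρ, σ`, `0 < α < 1` and
`z ≥ max{α, 1−α}`, the minimum of `F_{α,z}(ρ, Σ_i p_i U_i σ U_i*)` over all mixed unitary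
channels equals `F_α^C(λ↓(ρ), λ↑(σ))`, attained by a single unitary conjugation. -/
theorem stmt_15 {d : ℕ} (ρ σ : Matrix (Fin d) (Fin d) ℂ)
    (hρ : ρ.PosDef) (hσ : σ.PosDef) (hρ1 : ρ.trace = 1) (hσ1 : σ.trace = 1)
    (α z : ℝ) (hα : α ∈ Set.Ioo (0 : ℝ) 1) (hz : max α (1 - α) ≤ z) :
    IsLeast {x : ℝ | ∃ (k : ℕ) (p : Fin k → ℝ)
        (U : Fin k → Matrix.unitaryGroup (Fin d) ℂ),
        (∀ i, 0 ≤ p i) ∧ ∑ i, p i = 1 ∧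
        x = Faz ρ (∑ i, ((p i : ℝ) : ℂ) •
              ((U i : Matrix (Fin d) (Fin d) ℂ) * σ *
                star (U i : Matrix (Fin d) (Fin d) ℂ))) α z}
      (FazC (eigDown hρ.1) (eigUp hσ.1) α) ∧
    ∃ U ∈ Matrix.unitaryGroup (Fin d) ℂ,
      Faz ρ (U * σ * star U) α z = FazC (eigDown hρ.1) (eigUp hσ.1) α :=
  stmt_15_general ρ σ hρ.posSemidef hσ α z ⟨hα.1, hα.2.le⟩
    (hα.1.trans_le ((le_max_left _ _).trans hz))
end
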